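/- arXiv:math/0401309 — 2 statements merged into one kernel-verified Lean document; each statement's English description precedes it below -/
import Mathlib

section
/- Let n ≥ 2, α ∈ (0,2), and let σ be the surface measure on the unit sphere S ⊆ ℝⁿ. Let v be α-harmonic in the open unit ball B and positive on B, and suppose there exists c > 0 such that v(x) ≥ c (1−|x|)^{α/2−1} for all x ∈ B. Then for every function u that is α-harmonic in B and positive on B, for σ-almost every z ∈ S and every β > 1, the limit of u(x)/v(x) as x → z with x ∈ A^β_z exists. -/
open Metric Set MeasureTheory Filter

/-- The α-stable Poisson kernel of the ball `B(x₀, r)`. -/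
noncomputable def stablePoissonKernel (n : ℕ) (α : ℝ) (x₀ : EuclideanSpace ℝ (Fin n))
    (r : ℝ) (x v : EuclideanSpace ℝ (Fin n)) : ℝ :=
  (Real.Gamma (n / 2) * Real.pi ^ (-(n : ℝ) / 2 - 1) * Real.sin (Real.pi * α / 2)) *
    ((r ^ 2 - dist x x₀ ^ 2) / (dist v x₀ ^ 2 - r ^ 2)) ^ (α / 2) *
    dist x v ^ (-(n : ℝ))

/-- `u : ℝⁿ → [0,∞)` Borel with `∫ u(x)(1+|x|)^{−n−α} dx < ∞` is α-harmonic in the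
open set `D` if, for every ball whose closure lies in `D` and every point `x` of the
ball, `∫_{|v−x₀|>r} P_{x₀,r}(x,v) u(v) dv` is finite and equals `u(x)`. -/
def IsAlphaHarmonic (n : ℕ) (α : ℝ) (D : Set (EuclideanSpace ℝ (Fin n)))
    (u : EuclideanSpace ℝ (Fin n) → ℝ) : Prop :=
  Measurable u ∧ (∀ x, 0 ≤ u x) ∧
    Integrable (fun x => u x * (1 + ‖x‖) ^ (-(n : ℝ) - α)) ∧
    ∀ (x₀ : EuclideanSpace ℝ (Fin n)) (r : ℝ), 0 < r → closedBall x₀ r ⊆ D →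
      ∀ x ∈ ball x₀ r,
        IntegrableOn (fun v => stablePoissonKernel n α x₀ r x v * u v)
          {v | r < dist v x₀} ∧
        ∫ v in {v | r < dist v x₀}, stablePoissonKernel n α x₀ r x v * u v = u x

/-- Martin kernel of the unit ball for the symmetric α-stable process, normalized at
the origin: `M(x,w) = (1−|x|²)^{α/2} |x−w|^{−n}`. -/
noncomputable def martinKernel (n : ℕ) (α : ℝ) (x w : EuclideanSpace ℝ (Fin n)) : ℝ :=
  (1 - ‖x‖ ^ 2) ^ (α / 2) * dist x w ^ (-(n : ℝ))

/-- Stolz open set of the unit ball at a boundary point `z`, with angle `β > 1`: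
`A^β_z = { y ∈ B : 1−|y| < 1/3 ∧ |y−z| < β(1−|y|) }`. -/
def stolzSet (n : ℕ) (β : ℝ) (z : EuclideanSpace ℝ (Fin n)) :
    Set (EuclideanSpace ℝ (Fin n)) :=
  {y | y ∈ ball (0 : EuclideanSpace ℝ (Fin n)) 1 ∧ 1 - ‖y‖ < 1 / 3 ∧
    dist y z < β * (1 - ‖y‖)}


lemma aux_layer {E : Type*} [PseudoMetricSpace E] [MeasurableSpace E] [OpensMeasurableSpace E]
    (n : ℕ) (hn : 2 ≤ n) (ν : Measure E) (z : E) (d b : ℝ) (hd : 0 < d) (hb : 0 ≤ b)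
    (h : ∀ r : ℝ, 0 < r → ν (closedBall z r) ≤ ENNReal.ofReal (b * r ^ (n - 1))) :
    ∫⁻ w, ENNReal.ofReal (((max (dist w z) d) ^ n)⁻¹) ∂ν ≤ ENNReal.ofReal (2 ^ (n + 1) * b / d) := by
  have hpt : ∀ w, ENNReal.ofReal (((max (dist w z) d) ^ n)⁻¹) ≤
      ∑' k : ℕ, (closedBall z (2 ^ k * d)).indicator
        (fun _ => ENNReal.ofReal (2 ^ n * ((2 ^ k * d) ^ n)⁻¹)) w := by
    intro w
    have hex : ∃ k : ℕ, dist w z ≤ 2 ^ k * d := by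
      obtain ⟨k, hk⟩ := pow_unbounded_of_one_lt (dist w z / d) (one_lt_two)
      exact ⟨k, by rw [div_lt_iff₀ hd] at hk; exact hk.le⟩
    classical
    let k := Nat.find hex
    have hk : dist w z ≤ 2 ^ k * d := Nat.find_spec hex
    refine le_trans ?_ (ENNReal.le_tsum k)
    rw [indicator_of_mem (by simpa [mem_closedBall] using hk)]
    apply ENNReal.ofReal_le_ofReal
    have hm : 2 ^ k * d / 2 ≤ max (dist w z) d := by
      rcases Nat.eq_zero_or_pos k with h0 | h0
      · rw [h0]; apply le_max_of_le_right; simp; linarith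
      · apply le_max_of_le_left
        have := Nat.find_min hex (m := k - 1) (by omega)
        push Not at this
        have e : (2:ℝ) ^ k = 2 ^ (k - 1) * 2 := by
          rw [← pow_succ]; congr 1; omega
        rw [e]; linarith
    have hp : 0 < 2 ^ k * d / 2 := by positivity
    calc ((max (dist w z) d) ^ n)⁻¹ ≤ ((2 ^ k * d / 2) ^ n)⁻¹ := by gcongr
      _ = _ := by rw [div_pow, inv_div, div_eq_mul_inv]
  calc _ ≤ ∫⁻ w, ∑' k : ℕ, (closedBall z (2 ^ k * d)).indicator
        (fun _ => ENNReal.ofReal (2 ^ n * ((2 ^ k * d) ^ n)⁻¹)) w ∂ν := lintegral_mono hpt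
    _ = ∑' k : ℕ, ENNReal.ofReal (2 ^ n * ((2 ^ k * d) ^ n)⁻¹) * ν (closedBall z (2 ^ k * d)) := by
        rw [lintegral_tsum]
        · congr 1; ext k
          rw [lintegral_indicator isClosed_closedBall.measurableSet, lintegral_const,
            Measure.restrict_apply_univ]
        · intro k
          exact (measurable_const.indicator isClosed_closedBall.measurableSet).aemeasurable
    _ ≤ ∑' k : ℕ, ENNReal.ofReal ((2 ^ n * b / d) * (1 / 2) ^ k) := by
        apply ENNReal.tsum_le_tsum
        intro k
        have hp : 0 < 2 ^ k * d := by positivity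
        calc _ ≤ ENNReal.ofReal (2 ^ n * ((2 ^ k * d) ^ n)⁻¹) *
              ENNReal.ofReal (b * (2 ^ k * d) ^ (n - 1)) := by gcongr; exact h _ hp
          _ = _ := by
            rw [← ENNReal.ofReal_mul (by positivity)]
            congr 1
            have e : (2 ^ k * d) ^ n = (2 ^ k * d) ^ (n - 1) * (2 ^ k * d) := by
              rw [← pow_succ]; congr 1; omega
            rw [e, one_div, inv_pow]
            field_simp
    _ = ENNReal.ofReal (2 ^ (n + 1) * b / d) := by
        rw [← ENNReal.ofReal_tsum_of_nonneg (fun k => by positivity)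
          (summable_geometric_two.mul_left _), tsum_mul_left, tsum_geometric_two]
        congr 1; ring

lemma aux_small {E : Type*} [PseudoMetricSpace E] [MeasurableSpace E] [OpensMeasurableSpace E]
    (n : ℕ) (hn : 2 ≤ n) (ν : Measure E) [IsFiniteMeasure ν] (z : E)
    (h : ∀ ε : ℝ, 0 < ε → ∃ ρ : ℝ, 0 < ρ ∧ ∀ r : ℝ, 0 < r → r ≤ ρ →
      ν (closedBall z r) ≤ ENNReal.ofReal (ε * r ^ (n - 1))) (ε : ℝ) (hε : 0 < ε) :
    ∃ d₀ : ℝ, 0 < d₀ ∧ ∀ d : ℝ, 0 < d → d < d₀ →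
    ∫⁻ w, ENNReal.ofReal (((max (dist w z) d) ^ n)⁻¹) ∂ν ≤ ENNReal.ofReal (ε / d) := by
  obtain ⟨ρ, hρ, hh⟩ := h (ε / 2 ^ (n + 2)) (by positivity)
  set M := (ν univ).toReal with hM
  have hMn : 0 ≤ M := ENNReal.toReal_nonneg
  refine ⟨ε / 2 / (M / ρ ^ n + 1), by positivity, fun d hd hdd => ?_⟩
  rw [← lintegral_add_compl _ (isClosed_closedBall (x := z) (ε := ρ)).measurableSet]
  have h1 : ∫⁻ w in closedBall z ρ, ENNReal.ofReal (((max (dist w z) d) ^ n)⁻¹) ∂ν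
      ≤ ENNReal.ofReal (ε / 2 / d) := by
    refine (aux_layer n hn (ν.restrict (closedBall z ρ)) z d (ε / 2 ^ (n + 2)) hd (by positivity)
      ?_).trans (le_of_eq ?_)
    · intro r hr
      rw [Measure.restrict_apply isClosed_closedBall.measurableSet]
      rcases le_total r ρ with hl | hl
      · exact (measure_mono inter_subset_left).trans (hh r hr hl)
      · refine (measure_mono inter_subset_right).trans ((hh ρ hρ le_rfl).trans ?_)
        apply ENNReal.ofReal_le_ofReal
        gcongr
    · congr 1
      rw [pow_succ 2 (n+1)]; field_simp
  have h2 : ∫⁻ w in (closedBall z ρ)ᶜ, ENNReal.ofReal (((max (dist w z) d) ^ n)⁻¹) ∂ν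
      ≤ ENNReal.ofReal (ε / 2 / d) := by
    calc _ ≤ ∫⁻ w in (closedBall z ρ)ᶜ, ENNReal.ofReal ((ρ ^ n)⁻¹) ∂ν := by
          apply setLIntegral_mono' isClosed_closedBall.measurableSet.compl
          intro w hw
          apply ENNReal.ofReal_le_ofReal
          have : ρ ≤ max (dist w z) d := le_max_of_le_left (by
            simp [mem_closedBall] at hw; exact hw.le)
          gcongr
      _ ≤ ENNReal.ofReal ((ρ ^ n)⁻¹) * ν univ := by
          rw [lintegral_const, Measure.restrict_apply_univ]; gcongr; exact subset_univ _
      _ = ENNReal.ofReal ((ρ ^ n)⁻¹ * M) := by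
          rw [ENNReal.ofReal_mul (by positivity), hM, ENNReal.ofReal_toReal (measure_ne_top _ _)]
      _ ≤ _ := by
          apply ENNReal.ofReal_le_ofReal
          rw [lt_div_iff₀ (by positivity)] at hdd
          rw [le_div_iff₀ hd]
          have : (ρ ^ n)⁻¹ * M = M / ρ ^ n := by rw [div_eq_mul_inv, mul_comm]
          rw [this]; nlinarith
  calc _ ≤ ENNReal.ofReal (ε / 2 / d) + ENNReal.ofReal (ε / 2 / d) := add_le_add h1 h2
    _ = _ := by rw [← ENNReal.ofReal_add (by positivity) (by positivity)]; congr 1; ring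

set_option maxHeartbeats 1000000 in
open Module in
lemma sphere_haus (n : ℕ) (hn : 2 ≤ n) (z : EuclideanSpace ℝ (Fin n)) (hz : ‖z‖ = 1) :
    ∃ c C : ℝ, 0 < c ∧ 0 < C ∧ ∀ r : ℝ, 0 < r → r ≤ 1 / 2 →
      ENNReal.ofReal (c * r ^ (n - 1)) ≤
        μH[(n : ℝ) - 1] (closedBall z r ∩ sphere (0 : EuclideanSpace ℝ (Fin n)) 1) ∧
      μH[(n : ℝ) - 1] (closedBall z r ∩ sphere (0 : EuclideanSpace ℝ (Fin n)) 1) ≤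
        ENNReal.ofReal (C * r ^ (n - 1)) := by
  have hz0 : z ≠ 0 := by intro h; simp [h] at hz
  let F : Submodule ℝ (EuclideanSpace ℝ (Fin n)) := (Submodule.span ℝ {z})ᗮ
  have hF : finrank ℝ F = n - 1 := by
    have h1 := Submodule.finrank_add_finrank_orthogonal (Submodule.span ℝ {z})
    rw [finrank_span_singleton hz0, finrank_euclideanSpace_fin] at h1
    change finrank ℝ (Submodule.span ℝ {z})ᗮ = _
    omega
  have hF' : ((n : ℝ) - 1) = ((finrank ℝ F : ℕ) : ℝ) := by
    rw [hF, Nat.cast_sub (by omega)]; simp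
  set m : Measure F := μH[(finrank ℝ F : ℕ)] with hm
  have hmb : ∀ r : ℝ, 0 ≤ r → m (closedBall 0 r) = ENNReal.ofReal (r ^ (n - 1)) * m (ball 0 1) := by
    intro r hr
    rw [Measure.addHaar_closedBall _ _ hr, hF]
  set b := (m (ball 0 1)).toReal with hb
  have hbt : m (ball 0 1) ≠ ⊤ := measure_ball_lt_top.ne
  have hb0 : 0 < b := ENNReal.toReal_pos (measure_ball_pos m 0 one_pos).ne' hbt
  have hmb' : ∀ r : ℝ, 0 ≤ r → m (closedBall 0 r) = ENNReal.ofReal (r ^ (n - 1) * b) := by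
    intro r hr
    rw [hmb r hr, ENNReal.ofReal_mul (by positivity), hb, ENNReal.ofReal_toReal hbt]
  let g : F → EuclideanSpace ℝ (Fin n) := fun y => (y : EuclideanSpace ℝ (Fin n)) + √(1 - ‖y‖ ^ 2) • z
  have horth : ∀ y : F, inner ℝ (y : EuclideanSpace ℝ (Fin n)) z = 0 := by
    intro y
    have := (Submodule.mem_orthogonal_singleton_iff_inner_left).1 y.2
    exact this
  have hnorm : ∀ (y : F) (t : ℝ), ‖(y : EuclideanSpace ℝ (Fin n)) + t • z‖ ^ 2 = ‖y‖ ^ 2 + t ^ 2 := by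
    intro y t
    rw [@norm_add_sq_real, inner_smul_right, horth, norm_smul, hz]
    simp
  have hgs : ∀ y : F, ‖y‖ ≤ 1 → ‖g y‖ = 1 := by
    intro y hy
    have h1 := hnorm y (√(1 - ‖y‖ ^ 2))
    have : 0 ≤ 1 - ‖y‖ ^ 2 := by nlinarith [norm_nonneg y]
    rw [Real.sq_sqrt this] at h1
    have h2 : ‖g y‖ ^ 2 = 1 := by rw [h1]; ring
    nlinarith [norm_nonneg (g y)]
  have hgd : ∀ y : F, ‖y‖ ≤ 1 → dist (g y) z ≤ 2 * ‖y‖ := by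
    intro y hy
    rw [dist_eq_norm]
    have e : g y - z = (y : EuclideanSpace ℝ (Fin n)) + (√(1 - ‖y‖ ^ 2) - 1) • z := by
      simp only [g, sub_smul, one_smul]; abel
    have h0 := norm_nonneg y
    have h1 := hnorm y (√(1 - ‖y‖ ^ 2) - 1)
    have h2 : 0 ≤ 1 - ‖y‖ ^ 2 := by nlinarith
    have h3 := Real.sq_sqrt h2
    have h4 := Real.sqrt_nonneg (1 - ‖y‖ ^ 2)
    rw [e]
    apply abs_le_of_sq_le_sq' _ (by positivity) |>.2
    rw [h1]
    have h5 : √(1 - ‖y‖ ^ 2) ≤ 1 := by nlinarith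
    nlinarith
  have hgl : LipschitzOnWith 2 g (closedBall 0 (1 / 2)) := by
    apply LipschitzOnWith.of_dist_le_mul
    intro y hy y' hy'
    rw [mem_closedBall, dist_zero_right] at hy hy'
    rw [dist_eq_norm, dist_eq_norm]
    have e : g y - g y' = ((y - y' : F) : EuclideanSpace ℝ (Fin n)) +
        (√(1 - ‖y‖ ^ 2) - √(1 - ‖y'‖ ^ 2)) • z := by
      simp only [g, sub_smul, Submodule.coe_sub]; abel
    have h1 := hnorm (y - y') (√(1 - ‖y‖ ^ 2) - √(1 - ‖y'‖ ^ 2))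
    have n0 := norm_nonneg y
    have n1 := norm_nonneg y'
    have h2 : 0 ≤ 1 - ‖y‖ ^ 2 := by nlinarith
    have h2' : 0 ≤ 1 - ‖y'‖ ^ 2 := by nlinarith
    have h3 := Real.sq_sqrt h2
    have h3' := Real.sq_sqrt h2'
    have h4 : 1 / 2 ≤ √(1 - ‖y‖ ^ 2) := Real.le_sqrt_of_sq_le (by nlinarith)
    have h4' : 1 / 2 ≤ √(1 - ‖y'‖ ^ 2) := Real.le_sqrt_of_sq_le (by nlinarith)
    set s := √(1 - ‖y‖ ^ 2)
    set s' := √(1 - ‖y'‖ ^ 2)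
    have h5 : (s - s') * (s + s') = (‖y'‖ - ‖y‖) * (‖y'‖ + ‖y‖) := by nlinarith
    have h6 : |s - s'| ≤ |‖y'‖ - ‖y‖| := by
      have h7 : |s - s'| * (s + s') = |‖y'‖ - ‖y‖| * (‖y'‖ + ‖y‖) := by
        have h7 := congrArg abs h5
        rwa [abs_mul, abs_mul, abs_of_nonneg (by positivity : 0 ≤ ‖y'‖ + ‖y‖),
          abs_of_nonneg (by linarith : 0 ≤ s + s')] at h7
      nlinarith [abs_nonneg (s - s'), abs_nonneg (‖y'‖ - ‖y‖)]
    have h8 : |‖y'‖ - ‖y‖| ≤ ‖y - y'‖ := by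
      rw [norm_sub_rev]; exact abs_norm_sub_norm_le y' y
    rw [e]
    apply abs_le_of_sq_le_sq' _ (by positivity) |>.2
    rw [h1]
    have h9 : (s - s') ^ 2 ≤ ‖y - y'‖ ^ 2 := by
      rw [← sq_abs (s - s')]; have := h6.trans h8; gcongr
    rw [NNReal.coe_ofNat, mul_pow]
    linarith [sq_nonneg ‖y - y'‖]
  have hproj : ∀ w : EuclideanSpace ℝ (Fin n), F.orthogonalProjectionOnto w = w - (inner ℝ w z) • z := by
    intro w
    have := Submodule.starProjection_orthogonal_val (K := Submodule.span ℝ {z}) w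
    have h2 := Submodule.starProjection_unit_singleton ℝ hz w
    rw [h2, real_inner_comm] at this
    exact this
  refine ⟨b / 2 ^ (n - 1), b * 2 ^ (n - 1), by positivity, by positivity, fun r hr hr2 => ⟨?_, ?_⟩⟩
  · have hsub : closedBall (0 : F) (r / 2) ⊆
        F.orthogonalProjectionOnto '' (closedBall z r ∩ sphere (0 : EuclideanSpace ℝ (Fin n)) 1) := by
      intro y hy
      rw [mem_closedBall, dist_zero_right] at hy
      refine ⟨g y, ⟨?_, ?_⟩, ?_⟩
      · rw [mem_closedBall]; have := hgd y (by linarith); linarith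
      · rw [mem_sphere, dist_zero_right]; exact hgs y (by linarith)
      · apply Subtype.ext
        rw [hproj]
        simp only [g, inner_add_left, horth, inner_smul_left, real_inner_self_eq_norm_sq, hz]
        simp
    have hlip : LipschitzWith 1 (F.orthogonalProjectionOnto) := by
      refine LipschitzWith.of_dist_le_mul fun a a' => ?_
      rw [dist_eq_norm, dist_eq_norm, ← map_sub, NNReal.coe_one, one_mul]
      exact Submodule.norm_orthogonalProjectionOnto_apply_le F _
    have := hlip.hausdorffMeasure_image_le (d := (n : ℝ) - 1) (by
      have : (2:ℝ) ≤ n := by exact_mod_cast hn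
      linarith) (closedBall z r ∩ sphere (0 : EuclideanSpace ℝ (Fin n)) 1)
    simp only [ENNReal.coe_one, ENNReal.one_rpow, one_mul] at this
    refine le_trans ?_ this
    refine le_trans ?_ (measure_mono hsub)
    rw [hF', ← hm, hmb' _ (by positivity)]
    apply le_of_eq; congr 1; rw [div_pow]; ring
  · have hsub : (closedBall z r ∩ sphere (0 : EuclideanSpace ℝ (Fin n)) 1) ⊆
        g '' (closedBall (0 : F) r) := by
      rintro w ⟨hw, hws⟩
      rw [mem_closedBall, dist_eq_norm] at hw
      rw [mem_sphere, dist_zero_right] at hws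
      have hin : 0 ≤ inner ℝ w z := by
        have := @norm_sub_sq_real _ _ _ w z
        rw [hz, hws] at this
        have := norm_nonneg (w - z)
        nlinarith
      refine ⟨F.orthogonalProjectionOnto w, ?_, ?_⟩
      · rw [mem_closedBall, dist_zero_right]
        have : F.orthogonalProjectionOnto w = F.orthogonalProjectionOnto (w - z) := by
          apply Subtype.ext
          rw [hproj, hproj, inner_sub_left, real_inner_self_eq_norm_sq, hz, sub_smul]; simp
        rw [this]
        exact (Submodule.norm_orthogonalProjectionOnto_apply_le F _).trans hw
      · have h1 : ‖F.orthogonalProjectionOnto w‖ ^ 2 = 1 - (inner ℝ w z) ^ 2 := by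
          have := hnorm (F.orthogonalProjectionOnto w) (inner ℝ w z)
          rw [hproj, sub_add_cancel, hws] at this
          linarith
        simp only [g, h1]
        rw [hproj, sub_sub_cancel, Real.sqrt_sq hin, sub_add_cancel]
    have h0 : (0:ℝ) ≤ (n : ℝ) - 1 := by
      have : (2:ℝ) ≤ n := by exact_mod_cast hn
      linarith
    refine (measure_mono hsub).trans (((hgl.mono
      (closedBall_subset_closedBall hr2)).hausdorffMeasure_image_le h0).trans ?_)
    rw [hF', ← hm, hmb' _ hr.le, hF, ENNReal.rpow_natCast]
    apply le_of_eq
    have : ((2 : NNReal) : ENNReal) ^ (n - 1) = ENNReal.ofReal (2 ^ (n - 1)) := by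
      rw [ENNReal.ofReal_pow (by norm_num)]; simp
    rw [this, ← ENNReal.ofReal_mul (by positivity)]
    congr 1; ring

lemma sphere_finite (n : ℕ) (hn : 2 ≤ n) :
    IsFiniteMeasure (μH[(n : ℝ) - 1].restrict (sphere (0 : EuclideanSpace ℝ (Fin n)) 1)) := by
  refine ⟨?_⟩
  rw [Measure.restrict_apply_univ]
  apply (isCompact_sphere (0 : EuclideanSpace ℝ (Fin n)) 1).measure_lt_top_of_nhdsWithin
  intro z hz
  obtain ⟨c, C, -, -, h⟩ := sphere_haus n hn z (by simpa using hz)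
  refine ⟨closedBall z (1 / 2) ∩ sphere 0 1, ?_, ((h (1 / 2) (by norm_num) le_rfl).2).trans_lt
    ENNReal.ofReal_lt_top⟩
  exact inter_mem (mem_nhdsWithin_of_mem_nhds (closedBall_mem_nhds _ (by norm_num)))
    self_mem_nhdsWithin

/-- Truncated kernel. -/
noncomputable def truncKer (n : ℕ) (x w : EuclideanSpace ℝ (Fin n)) : ℝ :=
  ((max (dist x w) ((1 - ‖x‖) / 2)) ^ n)⁻¹

lemma truncKer_cont (n : ℕ) (x : EuclideanSpace ℝ (Fin n)) (hx : ‖x‖ < 1) :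
    Continuous (truncKer n x) := by
  unfold truncKer
  apply Continuous.inv₀
  · fun_prop
  · intro w
    have : 0 < max (dist x w) ((1 - ‖x‖) / 2) := lt_max_of_lt_right (by linarith)
    positivity

lemma truncKer_nonneg (n : ℕ) (x w : EuclideanSpace ℝ (Fin n)) : 0 ≤ truncKer n x w := by
  unfold truncKer
  have : 0 ≤ max (dist x w) ((1 - ‖x‖) / 2) := le_max_of_le_left dist_nonneg
  positivity

lemma truncKer_le (n : ℕ) (x w : EuclideanSpace ℝ (Fin n)) (hx : ‖x‖ < 1) :
    truncKer n x w ≤ (((1 - ‖x‖) / 2) ^ n)⁻¹ := by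
  unfold truncKer
  have : 0 < (1 - ‖x‖) / 2 := by linarith
  gcongr
  exact le_max_right _ _

lemma harm_step (n : ℕ) (hn : 2 ≤ n) (α : ℝ) (hα : α ∈ Set.Ioo (0 : ℝ) 2)
    (u : EuclideanSpace ℝ (Fin n) → ℝ)
    (hu : IsAlphaHarmonic n α (ball (0 : EuclideanSpace ℝ (Fin n)) 1) u) (R : ℝ)
    (hR : 1 / 2 < R) (hR1 : R < 1) :
    ∃ m : FiniteMeasure (EuclideanSpace ℝ (Fin n)), m.mass ≤ (2 ^ n * (4 * u 0)).toNNReal ∧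
      m (closedBall 0 2)ᶜ = 0 ∧
      ∀ x : EuclideanSpace ℝ (Fin n), ‖x‖ < 1 → (1 + ‖x‖) / 2 ≤ R →
        ∫ w, truncKer n x w ∂m ≤ u x * ((R ^ 2 - ‖x‖ ^ 2) ^ (α / 2))⁻¹ ∧
        u x * ((R ^ 2 - ‖x‖ ^ 2) ^ (α / 2))⁻¹ ≤ ∫ w, truncKer n x w ∂m + 2 ^ n * (4 * u 0) := by
  obtain ⟨hmeas, hpos, -, hP⟩ := hu
  obtain ⟨hα0, hα2⟩ := hα
  have hR0 : 0 < R := by linarith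
  set Cc : ℝ := Real.Gamma (n / 2) * Real.pi ^ (-(n : ℝ) / 2 - 1) * Real.sin (Real.pi * α / 2) with hCc
  have hCpos : 0 < Cc := by
    have h1 : 0 < Real.Gamma (n / 2) := Real.Gamma_pos_of_pos (by positivity)
    have h2 : 0 < Real.sin (Real.pi * α / 2) := by
      apply Real.sin_pos_of_pos_of_lt_pi
      · have := Real.pi_pos; positivity
      · nlinarith [Real.pi_pos]
    have h3 : 0 < Real.pi ^ (-(n : ℝ) / 2 - 1) := Real.rpow_pos_of_pos Real.pi_pos _
    positivity
  let W : EuclideanSpace ℝ (Fin n) → ℝ := fun v => Cc * ((‖v‖ ^ 2 - R ^ 2) ^ (α / 2))⁻¹ * u v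
  let T : Set (EuclideanSpace ℝ (Fin n)) := {v | R < ‖v‖}
  have hT : MeasurableSet T := measurableSet_lt measurable_const measurable_norm
  have hWm : Measurable W := by
    apply Measurable.mul _ hmeas
    apply Measurable.const_mul
    apply Measurable.inv
    exact ((measurable_norm.pow_const 2).sub_const _).pow_const _
  have hW0 : ∀ v ∈ T, 0 ≤ W v := by
    intro v hv
    have h1 : R < ‖v‖ := hv
    have h2 : 0 ≤ ‖v‖ ^ 2 - R ^ 2 := by nlinarith
    have h3 : 0 ≤ (‖v‖ ^ 2 - R ^ 2) ^ (α / 2) := Real.rpow_nonneg h2 _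
    have := hpos v
    positivity
  -- key identity
  have key : ∀ x : EuclideanSpace ℝ (Fin n), ‖x‖ < R →
      IntegrableOn (fun v => W v * (dist x v ^ n)⁻¹) T ∧
      ∫ v in T, W v * (dist x v ^ n)⁻¹ = u x * ((R ^ 2 - ‖x‖ ^ 2) ^ (α / 2))⁻¹ := by
    intro x hx
    have hq : 0 < R ^ 2 - ‖x‖ ^ 2 := by nlinarith [norm_nonneg x]
    set q : ℝ := (R ^ 2 - ‖x‖ ^ 2) ^ (α / 2) with hqd
    have hqp : 0 < q := Real.rpow_pos_of_pos hq _
    have hsub : closedBall (0 : EuclideanSpace ℝ (Fin n)) R ⊆ ball 0 1 :=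
      closedBall_subset_ball hR1
    obtain ⟨hi, he⟩ := hP 0 R hR0 hsub x (by simpa using hx)
    have hTe : {v : EuclideanSpace ℝ (Fin n) | R < dist v 0} = T := by
      ext v; simp [T]
    rw [hTe] at hi he
    have hEq : ∀ v ∈ T, stablePoissonKernel n α 0 R x v * u v = q * (W v * (dist x v ^ n)⁻¹) := by
      intro v hv
      have h1 : R < ‖v‖ := hv
      have h2 : 0 ≤ ‖v‖ ^ 2 - R ^ 2 := by nlinarith
      unfold stablePoissonKernel
      rw [dist_zero_right, dist_zero_right, Real.div_rpow hq.le h2, Real.rpow_neg dist_nonneg,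
        Real.rpow_natCast, ← hCc, ← hqd]
      simp only [W]
      rw [div_eq_mul_inv]
      ring
    have hi2 : IntegrableOn (fun v => q * (W v * (dist x v ^ n)⁻¹)) T :=
      hi.congr_fun hEq hT
    have hi3 : IntegrableOn (fun v => W v * (dist x v ^ n)⁻¹) T := by
      have := hi2.const_mul q⁻¹
      refine this.congr (Eventually.of_forall fun v => ?_)
      simp only
      rw [inv_mul_cancel_left₀ hqp.ne']
    refine ⟨hi3, ?_⟩
    rw [setIntegral_congr_fun hT hEq, integral_const_mul] at he
    rw [← he]; field_simp
  -- bound at zero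
  obtain ⟨hi0, he0⟩ := key 0 (by simpa using hR0)
  have hu0 : 0 ≤ u 0 := hpos 0
  have hb0 : ∫ v in T, W v * (dist 0 v ^ n)⁻¹ ≤ 4 * u 0 := by
    rw [he0]
    have h1 : (1 / 4 : ℝ) ≤ (R ^ 2 - ‖(0 : EuclideanSpace ℝ (Fin n))‖ ^ 2) ^ (α / 2) := by
      rw [norm_zero]
      have hx1 : (1 / 4 : ℝ) ≤ R ^ 2 - 0 ^ 2 := by nlinarith
      calc (1 / 4 : ℝ) = (1 / 4 : ℝ) ^ (1 : ℝ) := by rw [Real.rpow_one]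
        _ ≤ (1 / 4 : ℝ) ^ (α / 2) :=
          Real.rpow_le_rpow_of_exponent_ge (by norm_num) (by norm_num) (by linarith)
        _ ≤ _ := Real.rpow_le_rpow (by norm_num) hx1 (by linarith)
    have h2 : ((R ^ 2 - ‖(0 : EuclideanSpace ℝ (Fin n))‖ ^ 2) ^ (α / 2))⁻¹ ≤ 4 := by
      rw [inv_le_comm₀ (by linarith) (by norm_num)]; linarith
    nlinarith
  set T2 := T ∩ closedBall (0 : EuclideanSpace ℝ (Fin n)) 2 with hT2
  have hT2m : MeasurableSet T2 := hT.inter isClosed_closedBall.measurableSet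
  have hT2T : T2 ⊆ T := inter_subset_left
  -- W integrable on T2
  have hWle : ∀ v ∈ T2, W v ≤ 2 ^ n * (W v * (dist 0 v ^ n)⁻¹) := by
    rintro v ⟨hv, hv2⟩
    have h0 := hW0 v hv
    have h1 : R < ‖v‖ := hv
    rw [mem_closedBall, dist_zero_right] at hv2
    rw [dist_zero_left]
    have h3 : 0 < ‖v‖ := by linarith
    have h2 : 1 ≤ 2 ^ n * (‖v‖ ^ n)⁻¹ := by
      rw [← div_eq_mul_inv, ← div_pow]
      apply one_le_pow₀
      rw [le_div_iff₀ h3]; linarith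
    nlinarith
  have hWi : IntegrableOn W T2 := by
    refine Integrable.mono' ((hi0.mono_set hT2T).const_mul (2 ^ n)) hWm.aestronglyMeasurable ?_
    filter_upwards [ae_restrict_mem hT2m] with v hv
    rw [Real.norm_of_nonneg (hW0 v (hT2T hv))]
    exact hWle v hv
  have hWI : ∫ v in T2, W v ≤ 2 ^ n * (4 * u 0) := by
    calc _ ≤ ∫ v in T2, 2 ^ n * (W v * (dist 0 v ^ n)⁻¹) :=
          setIntegral_mono_on hWi ((hi0.mono_set hT2T).const_mul (2 ^ n)) hT2m hWle
      _ = 2 ^ n * ∫ v in T2, W v * (dist 0 v ^ n)⁻¹ := integral_const_mul _ _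
      _ ≤ 2 ^ n * ∫ v in T, W v * (dist 0 v ^ n)⁻¹ := by
          refine mul_le_mul_of_nonneg_left ?_ (by positivity)
          apply setIntegral_mono_set hi0 _ (LE.le.eventuallyLE hT2T)
          filter_upwards [ae_restrict_mem hT] with v hv
          have := hW0 v hv
          simp only [Pi.zero_apply]
          positivity
      _ ≤ _ := by gcongr
  let m0 : Measure (EuclideanSpace ℝ (Fin n)) :=
    (volume.restrict T2).withDensity (fun v => ENNReal.ofReal (W v))
  have hm0 : m0 univ = ENNReal.ofReal (∫ v in T2, W v) := by
    rw [withDensity_apply _ MeasurableSet.univ, Measure.restrict_univ,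
      ofReal_integral_eq_lintegral_ofReal hWi]
    filter_upwards [ae_restrict_mem hT2m] with v hv using hW0 v (hT2T hv)
  have hfin : IsFiniteMeasure m0 := ⟨by rw [hm0]; exact ENNReal.ofReal_lt_top⟩
  have hint : ∀ f : EuclideanSpace ℝ (Fin n) → ℝ, ∫ w, f w ∂m0 = ∫ v in T2, W v * f v := by
    intro f
    rw [integral_withDensity_eq_integral_toReal_smul hWm.ennreal_ofReal
      (Eventually.of_forall fun v => ENNReal.ofReal_lt_top)]
    apply setIntegral_congr_fun hT2m
    intro v hv
    simp only [smul_eq_mul]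
    rw [ENNReal.toReal_ofReal (hW0 v (hT2T hv))]
  let mF : FiniteMeasure (EuclideanSpace ℝ (Fin n)) := ⟨m0, hfin⟩
  refine ⟨mF, ?_, ?_, ?_⟩
  · change (m0 univ).toNNReal ≤ _
    rw [hm0]
    exact Real.toNNReal_le_toNNReal hWI
  · have : m0 (closedBall 0 2)ᶜ = 0 := by
      rw [withDensity_apply _ isClosed_closedBall.measurableSet.compl,
        Measure.restrict_restrict isClosed_closedBall.measurableSet.compl]
      have : (closedBall (0 : EuclideanSpace ℝ (Fin n)) 2)ᶜ ∩ T2 = ∅ := by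
        ext v; simp only [hT2]; constructor
        · rintro ⟨h1, h2, h3⟩; exact (h1 h3).elim
        · intro h; exact h.elim
      rw [this]; simp
    change (m0 (closedBall 0 2)ᶜ).toNNReal = 0
    rw [this]; rfl
  · intro x hx hxR
    have hxR' : ‖x‖ < R := by linarith
    obtain ⟨hi, he⟩ := key x hxR'
    have hI : ∫ w, truncKer n x w ∂mF =
        ∫ v in T2, W v * (dist x v ^ n)⁻¹ := by
      change ∫ w, truncKer n x w ∂m0 = _
      rw [hint]
      apply setIntegral_congr_fun hT2m
      intro v hv
      have h1 : R < ‖v‖ := hv.1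
      simp only [truncKer]
      rw [max_eq_left]
      have : ‖v‖ - ‖x‖ ≤ dist x v := by
        rw [dist_comm, dist_eq_norm]; exact norm_sub_norm_le v x
      linarith
    rw [hI, ← he]
    have hnn : ∀ v ∈ T, 0 ≤ W v * (dist x v ^ n)⁻¹ := by
      intro v hv
      have := hW0 v hv
      positivity
    constructor
    · apply setIntegral_mono_set hi _ (LE.le.eventuallyLE hT2T)
      filter_upwards [ae_restrict_mem hT] with v hv using hnn v hv
    · have hTd : T = T2 ∪ (T \ T2) := by rw [union_sdiff_cancel hT2T]
      have hdm : MeasurableSet (T \ T2) := hT.diff hT2m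
      have hsp : ∫ v in T, W v * (dist x v ^ n)⁻¹ =
          (∫ v in T2, W v * (dist x v ^ n)⁻¹) + ∫ v in T \ T2, W v * (dist x v ^ n)⁻¹ := by
        conv_lhs => rw [hTd]
        exact setIntegral_union disjoint_sdiff_right hdm (hi.mono_set hT2T) (hi.mono_set sdiff_subset)
      rw [hsp]
      refine add_le_add_right ?_ _
      calc ∫ v in T \ T2, W v * (dist x v ^ n)⁻¹ ≤ ∫ v in T \ T2, 2 ^ n * (W v * (dist 0 v ^ n)⁻¹) := by
            apply setIntegral_mono_on (hi.mono_set sdiff_subset)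
              ((hi0.mono_set sdiff_subset).const_mul _) hdm
            rintro v ⟨hv, hv2⟩
            have h2 : 2 < ‖v‖ := by
              by_contra hcon
              exact hv2 ⟨hv, by simpa using hcon⟩
            have h3 : ‖v‖ / 2 ≤ dist x v := by
              have : ‖v‖ - ‖x‖ ≤ dist x v := by
                rw [dist_comm, dist_eq_norm]; exact norm_sub_norm_le v x
              linarith
            have h4 : (dist x v ^ n)⁻¹ ≤ 2 ^ n * (‖v‖ ^ n)⁻¹ := by
              calc (dist x v ^ n)⁻¹ ≤ ((‖v‖ / 2) ^ n)⁻¹ := by gcongr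
                _ = _ := by rw [div_pow, inv_div, div_eq_mul_inv]
            rw [dist_zero_left]
            have := hW0 v hv
            nlinarith
        _ = 2 ^ n * ∫ v in T \ T2, W v * (dist 0 v ^ n)⁻¹ := integral_const_mul _ _
        _ ≤ 2 ^ n * ∫ v in T, W v * (dist 0 v ^ n)⁻¹ := by
            refine mul_le_mul_of_nonneg_left ?_ (by positivity)
            apply setIntegral_mono_set hi0 _ (LE.le.eventuallyLE sdiff_subset)
            filter_upwards [ae_restrict_mem hT] with v hv
            have := hW0 v hv
            simp only [Pi.zero_apply]
            positivity
        _ ≤ _ := by gcongr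

lemma harm_repr (n : ℕ) (hn : 2 ≤ n) (α : ℝ) (hα : α ∈ Set.Ioo (0 : ℝ) 2)
    (u : EuclideanSpace ℝ (Fin n) → ℝ)
    (hu : IsAlphaHarmonic n α (ball (0 : EuclideanSpace ℝ (Fin n)) 1) u) :
    ∃ m : FiniteMeasure (EuclideanSpace ℝ (Fin n)), ∃ K : ℝ, 0 ≤ K ∧
      ∀ x : EuclideanSpace ℝ (Fin n), ‖x‖ < 1 →
        ∫ w, truncKer n x w ∂m ≤ u x * ((1 - ‖x‖ ^ 2) ^ (α / 2))⁻¹ ∧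
        u x * ((1 - ‖x‖ ^ 2) ^ (α / 2))⁻¹ ≤ ∫ w, truncKer n x w ∂m + K := by
  have hstep := harm_step n hn α hα u hu
  have hu0 := hu.2.1 0
  choose! m hm1 hm2 hm3 using hstep
  let U : Ultrafilter ℝ := Ultrafilter.of (nhdsWithin 1 (Iio 1))
  have hU : (U : Filter ℝ) ≤ nhdsWithin 1 (Iio 1) := Ultrafilter.of_le _
  have hev : ∀ a : ℝ, a < 1 → ∀ᶠ R in (U : Filter ℝ), a < R ∧ R < 1 := by
    intro a ha
    apply hU
    filter_upwards [Ioo_mem_nhdsLT ha] with R hR using hR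
  have hcomp := isCompact_setOfPred_finiteMeasure_le_of_isCompact
    (2 ^ n * (4 * u 0)).toNNReal (isCompact_closedBall (0 : EuclideanSpace ℝ (Fin n)) 2)
  obtain ⟨μ, -, hμ⟩ := hcomp.ultrafilter_le_nhds' (U.map m) (by
    rw [Ultrafilter.mem_map]
    filter_upwards [hev (1 / 2) (by norm_num)] with R hR
    exact ⟨hm1 R hR.1 hR.2, hm2 R hR.1 hR.2⟩)
  have hμ' : Tendsto m U (nhds μ) := hμ
  rw [FiniteMeasure.tendsto_iff_forall_integral_tendsto] at hμ'
  refine ⟨μ, 2 ^ n * (4 * u 0), by positivity, fun x hx => ?_⟩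
  let f : BoundedContinuousFunction (EuclideanSpace ℝ (Fin n)) ℝ :=
    BoundedContinuousFunction.ofNormedAddCommGroup (truncKer n x) (truncKer_cont n x hx)
      ((((1 - ‖x‖) / 2) ^ n)⁻¹) (fun w => by
        rw [Real.norm_of_nonneg (truncKer_nonneg n x w)]; exact truncKer_le n x w hx)
  have hf : Tendsto (fun R => ∫ w, truncKer n x w ∂(m R)) U (nhds (∫ w, truncKer n x w ∂μ)) := hμ' f
  have hg : Tendsto (fun R : ℝ => u x * ((R ^ 2 - ‖x‖ ^ 2) ^ (α / 2))⁻¹) U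
      (nhds (u x * ((1 - ‖x‖ ^ 2) ^ (α / 2))⁻¹)) := by
    have h1 : 0 < (1 : ℝ) ^ 2 - ‖x‖ ^ 2 := by nlinarith [norm_nonneg x]
    have : ContinuousAt (fun R : ℝ => u x * ((R ^ 2 - ‖x‖ ^ 2) ^ (α / 2))⁻¹) 1 := by
      apply ContinuousAt.mul continuousAt_const
      apply ContinuousAt.inv₀
      · apply ContinuousAt.rpow_const
        · fun_prop
        · left; exact h1.ne'
      · exact (Real.rpow_pos_of_pos h1 _).ne'
    have h2 := this.tendsto
    simp only [one_pow] at h2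
    exact h2.mono_left (hU.trans nhdsWithin_le_nhds)
  constructor
  · apply le_of_tendsto_of_tendsto hf hg
    filter_upwards [hev ((1 + ‖x‖) / 2) (by linarith)] with R hR
    exact (hm3 R (by linarith [norm_nonneg x, hR.1]) hR.2 x hx hR.1.le).1
  · apply le_of_tendsto_of_tendsto hg (hf.add_const _)
    filter_upwards [hev ((1 + ‖x‖) / 2) (by linarith)] with R hR
    exact (hm3 R (by linarith [norm_nonneg x, hR.1]) hR.2 x hx hR.1.le).2

lemma ker_le (n : ℕ) (β : ℝ) (hβ : 1 < β) (x z w : EuclideanSpace ℝ (Fin n))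
    (hx : x ∈ stolzSet n β z) :
    truncKer n x w ≤ (1 + 2 * β) ^ n * ((max (dist w z) (1 - ‖x‖)) ^ n)⁻¹ := by
  obtain ⟨h1, -, h3⟩ := hx
  rw [mem_ball, dist_zero_right] at h1
  unfold truncKer
  set t := max (dist x w) ((1 - ‖x‖) / 2) with ht
  have ht1 : dist x w ≤ t := le_max_left _ _
  have ht2 : (1 - ‖x‖) / 2 ≤ t := le_max_right _ _
  have ht0 : 0 < t := by linarith
  have hm : max (dist w z) (1 - ‖x‖) ≤ (1 + 2 * β) * t := by
    apply max_le
    · have := dist_triangle w x z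
      rw [dist_comm w x] at this
      nlinarith
    · nlinarith
  have hm0 : 0 < max (dist w z) (1 - ‖x‖) := lt_max_of_lt_right (by linarith)
  rw [← div_eq_mul_inv, ← div_pow, ← inv_pow]
  gcongr
  rw [le_div_iff₀ hm0, inv_mul_le_iff₀ ht0]
  linarith

lemma int_ker_le (n : ℕ) (β : ℝ) (hβ : 1 < β) (x z : EuclideanSpace ℝ (Fin n))
    (hx : x ∈ stolzSet n β z) (ν : Measure (EuclideanSpace ℝ (Fin n))) (b : ℝ) (hb : 0 ≤ b)
    (h : ∫⁻ w, ENNReal.ofReal (((max (dist w z) (1 - ‖x‖)) ^ n)⁻¹) ∂ν ≤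
      ENNReal.ofReal (b / (1 - ‖x‖))) :
    (1 - ‖x‖) * ∫ w, truncKer n x w ∂ν ≤ (1 + 2 * β) ^ n * b := by
  have h1 : ‖x‖ < 1 := by simpa using hx.1
  rw [integral_eq_lintegral_of_nonneg_ae (Eventually.of_forall (truncKer_nonneg n x))
    (truncKer_cont n x h1).aestronglyMeasurable]
  have hle : ∫⁻ w, ENNReal.ofReal (truncKer n x w) ∂ν ≤
      ENNReal.ofReal ((1 + 2 * β) ^ n * (b / (1 - ‖x‖))) := by
    calc _ ≤ ∫⁻ w, ENNReal.ofReal ((1 + 2 * β) ^ n) *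
          ENNReal.ofReal (((max (dist w z) (1 - ‖x‖)) ^ n)⁻¹) ∂ν := by
          apply lintegral_mono
          intro w
          simp only
          rw [← ENNReal.ofReal_mul (by positivity)]
          exact ENNReal.ofReal_le_ofReal (ker_le n β hβ x z w hx)
      _ = ENNReal.ofReal ((1 + 2 * β) ^ n) *
          ∫⁻ w, ENNReal.ofReal (((max (dist w z) (1 - ‖x‖)) ^ n)⁻¹) ∂ν :=
          lintegral_const_mul' _ _ ENNReal.ofReal_ne_top
      _ ≤ _ := by
          rw [ENNReal.ofReal_mul (by positivity)]
          gcongr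
  have hd : 0 < 1 - ‖x‖ := by linarith
  have := ENNReal.toReal_mono ENNReal.ofReal_ne_top hle
  rw [ENNReal.toReal_ofReal (by positivity)] at this
  calc _ ≤ (1 - ‖x‖) * ((1 + 2 * β) ^ n * (b / (1 - ‖x‖))) := by gcongr
    _ = _ := by field_simp

lemma stolz_ev (n : ℕ) (β : ℝ) (z : EuclideanSpace ℝ (Fin n)) (hz : ‖z‖ = 1) (d : ℝ) (hd : 0 < d) :
    ∀ᶠ x in nhdsWithin z (stolzSet n β z), x ∈ stolzSet n β z ∧ ‖x‖ < 1 ∧ 1 - ‖x‖ < d := by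
  have h1 : ∀ᶠ x in nhds z, 1 - ‖x‖ < d := by
    have : ContinuousAt (fun x : EuclideanSpace ℝ (Fin n) => 1 - ‖x‖) z := by fun_prop
    apply this.eventually_lt_const
    simpa [hz] using hd
  filter_upwards [self_mem_nhdsWithin, mem_nhdsWithin_of_mem_nhds h1] with x hx hx1
  exact ⟨hx, by simpa using hx.1, hx1⟩

lemma ker_integrable (n : ℕ) (x : EuclideanSpace ℝ (Fin n)) (hx : ‖x‖ < 1)
    (ν : Measure (EuclideanSpace ℝ (Fin n))) [IsFiniteMeasure ν] :
    Integrable (truncKer n x) ν := by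
  refine Integrable.of_bound (truncKer_cont n x hx).aestronglyMeasurable
    ((((1 - ‖x‖) / 2) ^ n)⁻¹) (Eventually.of_forall fun w => ?_)
  rw [Real.norm_of_nonneg (truncKer_nonneg n x w)]
  exact truncKer_le n x w hx

lemma sigma_bounds (n : ℕ) (hn : 2 ≤ n) (z : EuclideanSpace ℝ (Fin n)) (hz : ‖z‖ = 1)
    (β : ℝ) (hβ : 1 < β) :
    ∃ a A : ℝ, 0 < a ∧ 0 < A ∧ ∀ᶠ x in nhdsWithin z (stolzSet n β z),
      a ≤ (1 - ‖x‖) * ∫ w, truncKer n x w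
        ∂(μH[(n : ℝ) - 1].restrict (sphere (0 : EuclideanSpace ℝ (Fin n)) 1)) ∧
      (1 - ‖x‖) * ∫ w, truncKer n x w
        ∂(μH[(n : ℝ) - 1].restrict (sphere (0 : EuclideanSpace ℝ (Fin n)) 1)) ≤ A := by
  obtain ⟨c, C, hc, hC, h⟩ := sphere_haus n hn z hz
  have := sphere_finite n hn
  set σ := (μH[(n : ℝ) - 1].restrict (sphere (0 : EuclideanSpace ℝ (Fin n)) 1)) with hσ
  have hσb : ∀ r, σ (closedBall z r) = μH[(n : ℝ) - 1] (closedBall z r ∩ sphere 0 1) := fun r =>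
    Measure.restrict_apply isClosed_closedBall.measurableSet
  set M := (σ univ).toReal with hM
  have hM0 : 0 ≤ M := ENNReal.toReal_nonneg
  refine ⟨c / (1 + β) ^ n, (1 + 2 * β) ^ n * (2 ^ (n + 1) * (C + M * 2 ^ (n - 1))),
    by positivity, by positivity, ?_⟩
  filter_upwards [stolz_ev n β z hz (1 / 2) (by norm_num)] with x ⟨hxs, hx1, hxd⟩
  have hd : 0 < 1 - ‖x‖ := by linarith
  constructor
  · have h1 : ∫ w in closedBall z (1 - ‖x‖), ((1 + β) ^ n * (1 - ‖x‖) ^ n)⁻¹ ∂σ ≤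
        ∫ w, truncKer n x w ∂σ := by
      calc _ ≤ ∫ w in closedBall z (1 - ‖x‖), truncKer n x w ∂σ := by
            apply setIntegral_mono_on (integrable_const _) (ker_integrable n x hx1 _)
              isClosed_closedBall.measurableSet
            intro w hw
            unfold truncKer
            rw [← mul_pow]
            have hm0 : 0 < max (dist x w) ((1 - ‖x‖) / 2) := lt_max_of_lt_right (by linarith)
            gcongr
            apply max_le
            · have := dist_triangle x z w
              rw [mem_closedBall, dist_comm] at hw
              have := hxs.2.2
              linarith
            · nlinarith
        _ ≤ _ := setIntegral_le_integral (ker_integrable n x hx1 _)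
            (Eventually.of_forall (truncKer_nonneg n x))
    rw [setIntegral_const, smul_eq_mul] at h1
    have h2 : c * (1 - ‖x‖) ^ (n - 1) ≤ σ.real (closedBall z (1 - ‖x‖)) := by
      have := (h (1 - ‖x‖) hd hxd.le).1
      rw [← hσb] at this
      exact (ENNReal.ofReal_le_iff_le_toReal (measure_ne_top _ _)).1 this
    have e : (1 - ‖x‖) ^ n = (1 - ‖x‖) ^ (n - 1) * (1 - ‖x‖) := by
      rw [← pow_succ]; congr 1; omega
    calc c / (1 + β) ^ n = (1 - ‖x‖) * (c * (1 - ‖x‖) ^ (n - 1) * ((1 + β) ^ n * (1 - ‖x‖) ^ n)⁻¹) := by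
          rw [e]; field_simp
      _ ≤ (1 - ‖x‖) * (σ.real (closedBall z (1 - ‖x‖)) * ((1 + β) ^ n * (1 - ‖x‖) ^ n)⁻¹) := by
          gcongr
      _ ≤ _ := by gcongr
  · apply int_ker_le n β hβ x z hxs σ _ (by positivity)
    apply aux_layer n hn σ z _ _ hd (by positivity)
    intro r hr
    rcases le_total r (1 / 2) with hl | hl
    · rw [hσb]
      refine ((h r hr hl).2).trans (ENNReal.ofReal_le_ofReal ?_)
      gcongr
      have : 0 ≤ M * 2 ^ (n - 1) := by positivity
      linarith
    · calc σ (closedBall z r) ≤ σ univ := measure_mono (subset_univ _)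
        _ = ENNReal.ofReal M := by rw [hM, ENNReal.ofReal_toReal (measure_ne_top _ _)]
        _ ≤ _ := by
          apply ENNReal.ofReal_le_ofReal
          have h3 : 1 ≤ (2 * r) ^ (n - 1) := one_le_pow₀ (by linarith)
          calc M ≤ M * (2 * r) ^ (n - 1) := le_mul_of_one_le_right hM0 h3
            _ = (0 + M * 2 ^ (n - 1)) * r ^ (n - 1) := by rw [mul_pow]; ring
            _ ≤ _ := by gcongr

lemma fatou_ratio (n : ℕ) (hn : 2 ≤ n) (m : Measure (EuclideanSpace ℝ (Fin n)))
    [IsFiniteMeasure m] :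
    ∀ᵐ z ∂(μH[(n : ℝ) - 1].restrict (sphere (0 : EuclideanSpace ℝ (Fin n)) 1)),
      ∃ L : ℝ, ∀ β : ℝ, 1 < β →
        Tendsto (fun x => (∫ w, truncKer n x w ∂m) / ∫ w, truncKer n x w
          ∂(μH[(n : ℝ) - 1].restrict (sphere (0 : EuclideanSpace ℝ (Fin n)) 1)))
        (nhdsWithin z (stolzSet n β z)) (nhds L) := by
  have := sphere_finite n hn
  have hsph : ∀ᵐ z ∂(μH[(n : ℝ) - 1].restrict (sphere (0 : EuclideanSpace ℝ (Fin n)) 1)),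
      z ∈ sphere (0 : EuclideanSpace ℝ (Fin n)) 1 :=
    ae_restrict_mem isClosed_sphere.measurableSet
  set σ := (μH[(n : ℝ) - 1].restrict (sphere (0 : EuclideanSpace ℝ (Fin n)) 1)) with hσ
  let f : EuclideanSpace ℝ (Fin n) → ℝ := fun w => (m.rnDeriv σ w).toReal
  have hfi : Integrable f σ := Measure.integrable_toReal_rnDeriv
  have hfm : Measurable f := (Measure.measurable_rnDeriv m σ).ennreal_toReal
  have hσF : IsFiniteMeasure σ := sphere_finite n hn
  have hLD : m.HaveLebesgueDecomposition σ :=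
    Measure.haveLebesgueDecomposition_of_sigmaFinite m σ
  have hsing := (Besicovitch.vitaliFamily σ).ae_eventually_measure_zero_of_singular
    (Measure.mutuallySingular_singularPart m σ)
  have hleb := (Besicovitch.vitaliFamily σ).ae_tendsto_lintegral_enorm_sub_div_of_integrable hfi
  filter_upwards [hsph, hsing, hleb] with z hz h1 h2
  have hz1 : ‖z‖ = 1 := by simpa using hz
  refine ⟨f z, fun β hβ => ?_⟩
  have h1' := h1.comp (Besicovitch.tendsto_filterAt σ z)
  have h2' := h2.comp (Besicovitch.tendsto_filterAt σ z)
  let ν2 : Measure (EuclideanSpace ℝ (Fin n)) := σ.withDensity (fun w => ‖f w - f z‖ₑ)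
  have hgi : Integrable (fun w => f w - f z) σ := hfi.sub (integrable_const _)
  have hgm : Measurable (fun w => ‖f w - f z‖ₑ) := (hfm.sub_const _).enorm
  have : IsFiniteMeasure ν2 := isFiniteMeasure_withDensity hgi.2.ne
  set ν := m.singularPart σ + ν2 with hν
  have hνt : Tendsto (fun r => ν (closedBall z r) / σ (closedBall z r)) (nhdsWithin 0 (Ioi 0))
      (nhds 0) := by
    have := h1'.add h2'
    rw [add_zero] at this
    refine this.congr fun r => ?_
    simp only [Function.comp, hν, Measure.add_apply, ν2]
    rw [withDensity_apply _ isClosed_closedBall.measurableSet, ENNReal.add_div]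
  obtain ⟨c, C, hc, hC, hσb⟩ := sphere_haus n hn z hz1
  have hσe : ∀ r, σ (closedBall z r) = μH[(n : ℝ) - 1] (closedBall z r ∩ sphere 0 1) := fun r =>
    Measure.restrict_apply isClosed_closedBall.measurableSet
  have hsmall : ∀ ε : ℝ, 0 < ε → ∃ ρ : ℝ, 0 < ρ ∧ ∀ r : ℝ, 0 < r → r ≤ ρ →
      ν (closedBall z r) ≤ ENNReal.ofReal (ε * r ^ (n - 1)) := by
    intro ε hε
    have hev := hνt.eventually_lt_const (u := ENNReal.ofReal (ε / C))
      (by rw [ENNReal.ofReal_pos]; positivity)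
    rw [eventually_nhdsWithin_iff, Metric.eventually_nhds_iff] at hev
    obtain ⟨δ, hδ, hh⟩ := hev
    refine ⟨min (δ / 2) (1 / 2), by positivity, fun r hr hrl => ?_⟩
    have hr1 : r ≤ δ / 2 := hrl.trans (min_le_left _ _)
    have hr2 : r ≤ 1 / 2 := hrl.trans (min_le_right _ _)
    have h3 := hh (y := r) (by rw [Real.dist_eq, sub_zero, abs_of_pos hr]; linarith) hr
    have h4 := hσb r hr hr2
    rw [← hσe] at h4
    have hpos : σ (closedBall z r) ≠ 0 := by
      have : 0 < ENNReal.ofReal (c * r ^ (n - 1)) := by rw [ENNReal.ofReal_pos]; positivity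
      exact (this.trans_le h4.1).ne'
    have h5 := (ENNReal.div_le_iff hpos (measure_ne_top _ _)).1 h3.le
    refine h5.trans ?_
    calc _ ≤ ENNReal.ofReal (ε / C) * ENNReal.ofReal (C * r ^ (n - 1)) := by gcongr; exact h4.2
      _ = _ := by
        rw [← ENNReal.ofReal_mul (by positivity)]; congr 1; field_simp
  obtain ⟨a, A, ha, hA, hbd⟩ := sigma_bounds n hn z hz1 β hβ
  -- difference bound
  have hdiff : ∀ x : EuclideanSpace ℝ (Fin n), ‖x‖ < 1 →
      |(∫ w, truncKer n x w ∂m) - f z * ∫ w, truncKer n x w ∂σ| ≤ ∫ w, truncKer n x w ∂ν := by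
    intro x hx
    have e1 : ∫ w, truncKer n x w ∂m = (∫ w, truncKer n x w ∂(m.singularPart σ)) +
        ∫ w, f w * truncKer n x w ∂σ := by
      conv_lhs => rw [Measure.haveLebesgueDecomposition_add m σ]
      rw [integral_add_measure (ker_integrable n x hx _) (ker_integrable n x hx _)]
      congr 1
      rw [integral_withDensity_eq_integral_toReal_smul (Measure.measurable_rnDeriv m σ)
        (Measure.rnDeriv_lt_top m σ)]
      rfl
    have e2 : ∫ w, truncKer n x w ∂ν = (∫ w, truncKer n x w ∂(m.singularPart σ)) +
        ∫ w, |f w - f z| * truncKer n x w ∂σ := by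
      rw [hν, integral_add_measure (ker_integrable n x hx _) (ker_integrable n x hx _)]
      congr 1
      rw [integral_withDensity_eq_integral_toReal_smul hgm
        (Eventually.of_forall fun w => enorm_lt_top)]
      simp [Real.norm_eq_abs]
    have hb1 : ∀ g : EuclideanSpace ℝ (Fin n) → ℝ, Integrable g σ →
        Integrable (fun w => g w * truncKer n x w) σ := by
      intro g hg
      refine hg.mul_bdd (c := (((1 - ‖x‖) / 2) ^ n)⁻¹)
        (truncKer_cont n x hx).aestronglyMeasurable (Eventually.of_forall fun w => ?_)
      rw [Real.norm_of_nonneg (truncKer_nonneg n x w)]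
      exact truncKer_le n x w hx
    have e3 : (∫ w, f w * truncKer n x w ∂σ) - f z * ∫ w, truncKer n x w ∂σ =
        ∫ w, (f w - f z) * truncKer n x w ∂σ := by
      rw [← integral_const_mul, ← integral_sub (hb1 f hfi) ((ker_integrable n x hx _).const_mul _)]
      congr 1; ext w; ring
    have e4 : |∫ w, (f w - f z) * truncKer n x w ∂σ| ≤ ∫ w, |f w - f z| * truncKer n x w ∂σ := by
      refine (abs_integral_le_integral_abs).trans (le_of_eq ?_)
      congr 1; ext w; rw [abs_mul, abs_of_nonneg (truncKer_nonneg n x w)]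
    have e5 : 0 ≤ ∫ w, truncKer n x w ∂(m.singularPart σ) :=
      integral_nonneg (truncKer_nonneg n x)
    rw [e1, e2, add_sub_assoc, e3]
    exact (abs_add_le _ _).trans (add_le_add (abs_of_nonneg e5).le e4)
  rw [Metric.tendsto_nhds]
  intro ε hε
  set ε' := ε * a / (2 * (1 + 2 * β) ^ n) with hε'
  have hε'0 : 0 < ε' := by positivity
  obtain ⟨d₀, hd₀, hsm⟩ := aux_small n hn ν z hsmall ε' hε'0
  filter_upwards [hbd, stolz_ev n β z hz1 d₀ hd₀] with x ⟨hxa, _⟩ ⟨hxs, hx1, hxd⟩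
  have hd : 0 < 1 - ‖x‖ := by linarith
  have h6 := int_ker_le n β hβ x z hxs ν ε' hε'0.le (hsm _ hd hxd)
  have h7 := hdiff x hx1
  set h := ∫ w, truncKer n x w ∂σ
  have hh : 0 < h := by
    by_contra hcon
    nlinarith
  rw [Real.dist_eq, div_sub' hh.ne', abs_div, abs_of_pos hh, div_lt_iff₀ hh, mul_comm h (f z)]
  have h8 : (1 + 2 * β) ^ n * ε' = ε * a / 2 := by rw [hε']; field_simp
  rw [h8] at h6
  have h9 : (1 - ‖x‖) * ∫ w, truncKer n x w ∂ν < (1 - ‖x‖) * (ε * h) := by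
    nlinarith [mul_pos hε ha]
  exact h7.trans_lt (lt_of_mul_lt_mul_left h9 hd.le)

lemma harm_ratio (n : ℕ) (α : ℝ)
    (u : EuclideanSpace ℝ (Fin n) → ℝ) (h I : EuclideanSpace ℝ (Fin n) → ℝ) (K : ℝ) (hK : 0 ≤ K)
    (hu : ∀ x : EuclideanSpace ℝ (Fin n), ‖x‖ < 1 →
        I x ≤ u x * ((1 - ‖x‖ ^ 2) ^ (α / 2))⁻¹ ∧ u x * ((1 - ‖x‖ ^ 2) ^ (α / 2))⁻¹ ≤ I x + K)
    (z : EuclideanSpace ℝ (Fin n)) (hz : ‖z‖ = 1) (β a : ℝ) (ha : 0 < a)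
    (hh : ∀ᶠ x in nhdsWithin z (stolzSet n β z), a ≤ (1 - ‖x‖) * h x)
    (L : ℝ) (hL : Tendsto (fun x => I x / h x) (nhdsWithin z (stolzSet n β z)) (nhds L)) :
    Tendsto (fun x => u x * ((1 - ‖x‖ ^ 2) ^ (α / 2))⁻¹ / h x)
      (nhdsWithin z (stolzSet n β z)) (nhds L) := by
  have hd : Tendsto (fun x : EuclideanSpace ℝ (Fin n) => K * ((1 - ‖x‖) / a))
      (nhdsWithin z (stolzSet n β z)) (nhds 0) := by
    have h1 : ContinuousAt (fun x : EuclideanSpace ℝ (Fin n) => K * ((1 - ‖x‖) / a)) z := by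
      fun_prop
    have h2 := h1.tendsto.mono_left (nhdsWithin_le_nhds (s := stolzSet n β z))
    simpa [hz] using h2
  have hL2 := hL.add hd
  rw [add_zero] at hL2
  refine tendsto_of_tendsto_of_tendsto_of_le_of_le' hL hL2 ?_ ?_
  · filter_upwards [hh, stolz_ev n β z hz 1 one_pos] with x hx ⟨_, hx1, _⟩
    have hp : 0 < h x := by by_contra hcon; nlinarith
    exact div_le_div_of_nonneg_right (hu x hx1).1 hp.le
  · filter_upwards [hh, stolz_ev n β z hz 1 one_pos] with x hx ⟨_, hx1, _⟩
    have hp : 0 < h x := by by_contra hcon; nlinarith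
    calc _ ≤ (I x + K) / h x := div_le_div_of_nonneg_right (hu x hx1).2 hp.le
      _ = I x / h x + K * (1 / h x) := by ring
      _ ≤ _ := by
        have hle : 1 / h x ≤ (1 - ‖x‖) / a := by
          rw [div_le_div_iff₀ hp ha]; linarith
        exact add_le_add le_rfl (mul_le_mul_of_nonneg_left hle hK)

/-- let `σ` be the surface measure on the unit sphere `S ⊆ ℝⁿ`. If `v`
is positive α-harmonic in `B` with `v(x) ≥ c (1−|x|)^{α/2−1}` for some `c > 0`, then
for every positive α-harmonic `u` in `B`, for σ-a.e. `z ∈ S` and every `β > 1`, the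
limit of `u(x)/v(x)` as `x → z`, `x ∈ A^β_z`, exists. -/
theorem stmt14 (n : ℕ) (hn : 2 ≤ n) (α : ℝ) (hα : α ∈ Set.Ioo (0 : ℝ) 2)
    (v : EuclideanSpace ℝ (Fin n) → ℝ)
    (hv : IsAlphaHarmonic n α (ball (0 : EuclideanSpace ℝ (Fin n)) 1) v)
    (hvpos : ∀ x ∈ ball (0 : EuclideanSpace ℝ (Fin n)) 1, 0 < v x)
    (c : ℝ) (hc : 0 < c)
    (hvbd : ∀ x ∈ ball (0 : EuclideanSpace ℝ (Fin n)) 1,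
      c * (1 - ‖x‖) ^ (α / 2 - 1) ≤ v x) :
    ∀ u : EuclideanSpace ℝ (Fin n) → ℝ,
      IsAlphaHarmonic n α (ball (0 : EuclideanSpace ℝ (Fin n)) 1) u →
      (∀ x ∈ ball (0 : EuclideanSpace ℝ (Fin n)) 1, 0 < u x) →
      ∀ᵐ z ∂(μH[(n : ℝ) - 1].restrict (sphere (0 : EuclideanSpace ℝ (Fin n)) 1)),
        ∀ β : ℝ, 1 < β → ∃ L : ℝ,
          Tendsto (fun x => u x / v x)
            (nhdsWithin z (stolzSet n β z)) (nhds L) := by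
  intro u hu _
  obtain ⟨mu, Ku, hKu, hru⟩ := harm_repr n hn α hα u hu
  obtain ⟨mv, Kv, hKv, hrv⟩ := harm_repr n hn α hα v hv
  have hsph : ∀ᵐ z ∂(μH[(n : ℝ) - 1].restrict (sphere (0 : EuclideanSpace ℝ (Fin n)) 1)),
      z ∈ sphere (0 : EuclideanSpace ℝ (Fin n)) 1 :=
    ae_restrict_mem isClosed_sphere.measurableSet
  filter_upwards [hsph, fatou_ratio n hn mu, fatou_ratio n hn mv] with z hz ⟨Lu, hLu⟩ ⟨Lv, hLv⟩
  intro β hβ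
  have hz1 : ‖z‖ = 1 := by simpa using hz
  obtain ⟨a, A, ha, hA, hbd⟩ := sigma_bounds n hn z hz1 β hβ
  have hbd1 := hbd.mono fun x hx => hx.1
  have tu := harm_ratio n α u _ _ Ku hKu hru z hz1 β a ha hbd1 Lu (hLu β hβ)
  have tv := harm_ratio n α v _ _ Kv hKv hrv z hz1 β a ha hbd1 Lv (hLv β hβ)
  set h : EuclideanSpace ℝ (Fin n) → ℝ := fun x => ∫ w, truncKer n x w
    ∂(μH[(n : ℝ) - 1].restrict (sphere (0 : EuclideanSpace ℝ (Fin n)) 1)) with hh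
  rcases eq_or_neBot (nhdsWithin z (stolzSet n β z)) with hbot | hne
  · exact ⟨0, by rw [hbot]; exact tendsto_bot⟩
  have hLvpos : 0 < Lv := by
    have h1 : c / (2 * A) ≤ Lv := by
      apply ge_of_tendsto tv
      filter_upwards [hbd, stolz_ev n β z hz1 1 one_pos] with x ⟨hx1, hx2⟩ ⟨_, hx, _⟩
      change a ≤ (1 - ‖x‖) * h x at hx1
      change (1 - ‖x‖) * h x ≤ A at hx2
      change _ ≤ _ / h x
      have hd : 0 < 1 - ‖x‖ := by linarith
      have hp : 0 < h x := by by_contra hcon; nlinarith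
      have hb := hvbd x (by simpa using hx)
      have e1 : (1 - ‖x‖ ^ 2) ^ (α / 2) = (1 - ‖x‖) ^ (α / 2) * (1 + ‖x‖) ^ (α / 2) := by
        rw [← Real.mul_rpow hd.le (by positivity)]; congr 1; ring
      have e2 : (1 - ‖x‖) ^ (α / 2 - 1) = (1 - ‖x‖) ^ (α / 2) / (1 - ‖x‖) := by
        rw [Real.rpow_sub_one hd.ne']
      have e3 : (1 + ‖x‖) ^ (α / 2) ≤ 2 := by
        calc (1 + ‖x‖) ^ (α / 2) ≤ (1 + ‖x‖) ^ (1 : ℝ) :=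
              Real.rpow_le_rpow_of_exponent_le (by linarith [norm_nonneg x]) (by linarith [hα.2])
          _ ≤ 2 := by rw [Real.rpow_one]; linarith
      rw [e2] at hb
      rw [e1]
      have hs : 0 < (1 - ‖x‖) ^ (α / 2) := Real.rpow_pos_of_pos hd _
      have hs2 : 0 < (1 + ‖x‖) ^ (α / 2) := Real.rpow_pos_of_pos (by positivity) _
      set s := (1 - ‖x‖) ^ (α / 2)
      set t := (1 + ‖x‖) ^ (α / 2)
      calc c / (2 * A) ≤ c / (t * ((1 - ‖x‖) * h x)) := by gcongr
        _ = (c * (s / (1 - ‖x‖))) * (s * t)⁻¹ / h x := by field_simp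
        _ ≤ _ := by gcongr
    exact lt_of_lt_of_le (by positivity) h1
  refine ⟨Lu / Lv, (tu.div tv hLvpos.ne').congr' ?_⟩
  filter_upwards [hbd1, stolz_ev n β z hz1 1 one_pos] with x hx1 ⟨_, hx, _⟩
  change a ≤ (1 - ‖x‖) * h x at hx1
  change (_ / h x) / (_ / h x) = _
  have hp : 0 < h x := by by_contra hcon; nlinarith
  have hq : 0 < (1 - ‖x‖ ^ 2) ^ (α / 2) :=
    Real.rpow_pos_of_pos (by nlinarith [norm_nonneg x]) _
  rw [div_div_div_cancel_right₀ hp.ne', mul_div_mul_right _ _ (inv_pos.2 hq).ne']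
end

section
/- (Representation by nontangential boundary values in the unit ball.) Let n ≥ 2, α ∈ (0,2), let μ and ν be finite Borel measures on the unit sphere S ⊆ ℝⁿ with ν nonzero, and define u(x) := ∫_S M(x,w) μ(dw) and h(x) := ∫_S M(x,w) ν(dw) for x in the open unit ball B. Suppose sup_{x∈B} u(x)/h(x) < ∞. Then there exists a Borel function φ : S → [0,∞) such that: (i) for ν-almost every z ∈ S and every β > 1, the limit of u(x)/h(x) as x → z with x ∈ A^β_z exists and equals φ(z); and (ii) u(x) = ∫_S M(x,w) φ(w) ν(dw) for every x ∈ B. In particular μ is absolutely continuous with respect to ν with Radon–Nikodym derivative φ. -/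
open Metric Set MeasureTheory Filter

lemma aux_layer_s15 {n : ℕ} (hn : 2 ≤ n) (η ν : Measure (EuclideanSpace ℝ (Fin n)))
    (z : EuclideanSpace ℝ (Fin n)) (ε : ENNReal) (hε : ε ≠ ⊤) (r₀ : ℝ) (hr₀ : 0 < r₀)
    (h : ∀ r ∈ Ioo 0 r₀, η (closedBall z r) ≤ ε * ν (closedBall z r)) (δ : ℝ) (hδ : 0 < δ) :
    ∫⁻ w, ENNReal.ofReal ((δ + dist w z) ^ (-(n : ℝ))) ∂η ≤
      ε * ∫⁻ w, ENNReal.ofReal ((δ + dist w z) ^ (-(n : ℝ))) ∂ν +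
        ENNReal.ofReal (r₀ ^ (-(n : ℝ))) * η univ := by
  have hn0 : (0 : ℝ) < n := by positivity
  have hmeas : Measurable (fun w : EuclideanSpace ℝ (Fin n) => (δ + dist w z) ^ (-(n : ℝ))) := by
    fun_prop
  have hnn : ∀ w : EuclideanSpace ℝ (Fin n), 0 ≤ (δ + dist w z) ^ (-(n : ℝ)) := fun w => by
    positivity
  rw [lintegral_eq_lintegral_meas_le η (ae_of_all _ hnn) hmeas.aemeasurable,
    lintegral_eq_lintegral_meas_le ν (ae_of_all _ hnn) hmeas.aemeasurable]
  set k₀ : ℝ := (δ + r₀) ^ (-(n : ℝ)) with hk₀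
  have hk₀r : k₀ ≤ r₀ ^ (-(n : ℝ)) :=
    Real.rpow_le_rpow_of_nonpos hr₀ (by linarith) (by linarith)
  have key : ∀ᵐ t ∂(volume.restrict (Ioi (0 : ℝ))),
      η {a | t ≤ (δ + dist a z) ^ (-(n : ℝ))} ≤
        ε * ν {a | t ≤ (δ + dist a z) ^ (-(n : ℝ))} +
          (Ioc 0 k₀).indicator (fun _ => η univ) t := by
    have hne : ∀ᵐ t ∂(volume.restrict (Ioi (0 : ℝ))), t ≠ δ ^ (-(n : ℝ)) :=
      ae_restrict_of_ae (by simp [ae_iff])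
    filter_upwards [hne, ae_restrict_mem measurableSet_Ioi] with t ht ht0
    have ht0 : 0 < t := ht0
    by_cases h1 : t ≤ k₀
    · rw [indicator_of_mem (show t ∈ Ioc 0 k₀ from ⟨ht0, h1⟩)]
      exact (measure_mono (subset_univ _)).trans le_add_self
    · push Not at h1
      set s : ℝ := t ^ (-(1 / (n : ℝ))) with hs
      have hs0 : 0 < s := Real.rpow_pos_of_pos ht0 _
      have hst : s ^ (-(n : ℝ)) = t := by
        rw [hs, ← Real.rpow_mul ht0.le]
        have : (-(1 / (n : ℝ))) * (-(n : ℝ)) = 1 := by field_simp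
        rw [this, Real.rpow_one]
      have hset : {a : EuclideanSpace ℝ (Fin n) | t ≤ (δ + dist a z) ^ (-(n : ℝ))} =
          closedBall z (s - δ) := by
        ext a
        simp only [Set.mem_ofPred_eq, mem_closedBall]
        rw [← hst, Real.rpow_le_rpow_iff_of_neg hs0 (by positivity) (by linarith)]
        constructor <;> intro h <;> linarith
      rw [hset]
      have hlt : s < δ + r₀ := by
        rw [hk₀, ← hst, Real.rpow_lt_rpow_iff_of_neg (by positivity) hs0 (by linarith)] at h1
        exact h1
      have hsδ : s ≠ δ := by
        rintro h
        rw [h] at hst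
        exact ht hst.symm
      rcases lt_or_gt_of_ne hsδ with h2 | h2
      · rw [closedBall_eq_empty.2 (by linarith)]; simp
      · exact (h (s - δ) ⟨by linarith, by linarith⟩).trans le_self_add
  refine (lintegral_mono_ae key).trans ?_
  rw [lintegral_add_right _ (measurable_const.indicator measurableSet_Ioc),
    lintegral_const_mul' _ _ hε, lintegral_indicator measurableSet_Ioc, lintegral_const]
  refine add_le_add le_rfl ?_
  rw [mul_comm]
  refine mul_le_mul' ?_ le_rfl
  rw [Measure.restrict_apply MeasurableSet.univ, univ_inter]
  refine (Measure.restrict_apply_le _ _).trans ?_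
  rw [Real.volume_Ioc, sub_zero]
  exact ENNReal.ofReal_le_ofReal hk₀r

lemma aux_compare {n : ℕ} (hn : 2 ≤ n) (η ν : Measure (EuclideanSpace ℝ (Fin n)))
    (hηS : η (sphere (0 : EuclideanSpace ℝ (Fin n)) 1)ᶜ = 0)
    (z : EuclideanSpace ℝ (Fin n)) (ε : ENNReal) (hε : ε ≠ ⊤) (r₀ : ℝ) (hr₀ : 0 < r₀)
    (h : ∀ r ∈ Ioo 0 r₀, η (closedBall z r) ≤ ε * ν (closedBall z r))
    (β : ℝ) (hβ : 1 < β) (x : EuclideanSpace ℝ (Fin n)) (hx : x ∈ stolzSet n β z)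
    (hνS : ν (sphere (0 : EuclideanSpace ℝ (Fin n)) 1)ᶜ = 0) :
    ∫⁻ w, ENNReal.ofReal (dist x w ^ (-(n : ℝ))) ∂η ≤
      ENNReal.ofReal ((2 + β) ^ (n : ℝ)) * (ε * (ENNReal.ofReal (β ^ (n : ℝ)) *
        ∫⁻ w, ENNReal.ofReal (dist x w ^ (-(n : ℝ))) ∂ν) +
        ENNReal.ofReal (r₀ ^ (-(n : ℝ))) * η univ) := by
  obtain ⟨hxB, -, hxz⟩ := hx
  rw [mem_ball_zero_iff] at hxB
  set δ := 1 - ‖x‖ with hδd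
  have hδ : 0 < δ := by linarith
  have hdist : ∀ w ∈ sphere (0 : EuclideanSpace ℝ (Fin n)) 1, δ ≤ dist x w := by
    intro w hw
    rw [mem_sphere_zero_iff_norm] at hw
    have := norm_sub_norm_le w x
    rw [dist_comm, dist_eq_norm]; linarith
  have A : ∫⁻ w, ENNReal.ofReal (dist x w ^ (-(n : ℝ))) ∂η ≤
      ENNReal.ofReal ((2 + β) ^ (n : ℝ)) *
        ∫⁻ w, ENNReal.ofReal ((δ + dist w z) ^ (-(n : ℝ))) ∂η := by
    rw [← lintegral_const_mul' _ _ ENNReal.ofReal_ne_top]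
    refine lintegral_mono_ae ?_
    filter_upwards [(show ∀ᵐ w ∂η, w ∈ sphere (0 : EuclideanSpace ℝ (Fin n)) 1 from hηS)] with w hw
    rw [← ENNReal.ofReal_mul (by positivity)]
    apply ENNReal.ofReal_le_ofReal
    have h1 := hdist w hw
    have h2 : dist w z ≤ dist x w + dist x z := by
      rw [dist_comm x w]; exact dist_triangle _ _ _
    have h3 : δ + dist w z ≤ (2 + β) * dist x w := by nlinarith
    have h4 : ((2 + β) * dist x w) ^ (-(n : ℝ)) ≤ (δ + dist w z) ^ (-(n : ℝ)) :=
      Real.rpow_le_rpow_of_nonpos (by positivity) h3 (by simp)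
    have h5 : (2 + β) ^ (n : ℝ) * ((2 + β) * dist x w) ^ (-(n : ℝ)) = dist x w ^ (-(n : ℝ)) := by
      rw [Real.mul_rpow (by positivity) (by positivity), ← mul_assoc,
        ← Real.rpow_add (by positivity)]
      simp
    rw [← h5]
    gcongr
  have B : ∫⁻ w, ENNReal.ofReal ((δ + dist w z) ^ (-(n : ℝ))) ∂ν ≤
      ENNReal.ofReal (β ^ (n : ℝ)) * ∫⁻ w, ENNReal.ofReal (dist x w ^ (-(n : ℝ))) ∂ν := by
    rw [← lintegral_const_mul' _ _ ENNReal.ofReal_ne_top]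
    refine lintegral_mono_ae ?_
    filter_upwards [(show ∀ᵐ w ∂ν, w ∈ sphere (0 : EuclideanSpace ℝ (Fin n)) 1 from hνS)] with w hw
    rw [← ENNReal.ofReal_mul (by positivity)]
    apply ENNReal.ofReal_le_ofReal
    have h1 := hdist w hw
    have h2 : dist x w ≤ dist x z + dist w z := by
      rw [dist_comm w z]; exact dist_triangle _ _ _
    have h0 : 0 ≤ dist w z := dist_nonneg
    have h3 : dist x w ≤ β * (δ + dist w z) := by nlinarith
    have h4 : (β * (δ + dist w z)) ^ (-(n : ℝ)) ≤ dist x w ^ (-(n : ℝ)) :=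
      Real.rpow_le_rpow_of_nonpos (by linarith) h3 (by simp)
    have h5 : β ^ (n : ℝ) * (β * (δ + dist w z)) ^ (-(n : ℝ)) = (δ + dist w z) ^ (-(n : ℝ)) := by
      rw [Real.mul_rpow (by positivity) (by positivity), ← mul_assoc,
        ← Real.rpow_add (by positivity)]
      simp
    rw [← h5]
    gcongr
  refine A.trans ?_
  gcongr
  refine (aux_layer_s15 hn η ν z ε hε r₀ hr₀ h δ hδ).trans ?_
  gcongr

lemma aux_infinity {n : ℕ} (hn : 2 ≤ n) (ν : Measure (EuclideanSpace ℝ (Fin n)))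
    (hνS : ν (sphere (0 : EuclideanSpace ℝ (Fin n)) 1)ᶜ = 0)
    (z : EuclideanSpace ℝ (Fin n)) (hz : ‖z‖ = 1)
    (h : Tendsto (fun r => (volume (closedBall z r)) / ν (closedBall z r)) (nhdsWithin 0 (Ioi 0))
      (nhds 0)) (β : ℝ) (hβ : 1 < β) :
    Tendsto (fun x => ∫⁻ w, ENNReal.ofReal (dist x w ^ (-(n : ℝ))) ∂ν)
      (nhdsWithin z (stolzSet n β z)) (nhds ⊤) := by
  have hδ : Tendsto (fun x : EuclideanSpace ℝ (Fin n) => 1 - ‖x‖)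
      (nhdsWithin z (stolzSet n β z)) (nhdsWithin 0 (Ioi 0)) := by
    rw [tendsto_nhdsWithin_iff]
    constructor
    · have : Continuous (fun x : EuclideanSpace ℝ (Fin n) => 1 - ‖x‖) := by fun_prop
      have h2 := this.tendsto z
      simp only [hz, sub_self] at h2
      exact h2.mono_left nhdsWithin_le_nhds
    · filter_upwards [self_mem_nhdsWithin] with x hx
      have := mem_ball_zero_iff.1 hx.1
      simpa using this
  set V : ENNReal := volume (ball (0 : EuclideanSpace ℝ (Fin n)) 1) with hV
  have hV0 : V ≠ 0 := (measure_ball_pos _ _ one_pos).ne'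
  set c : ENNReal := ENNReal.ofReal ((β + 1) ^ (-(n : ℝ))) * V with hc
  have hc0 : c ≠ 0 := by
    apply mul_ne_zero _ hV0
    have : 0 < (β + 1) ^ (-(n : ℝ)) := Real.rpow_pos_of_pos (by linarith) _
    simpa using this
  have hinv := (tendsto_inv_iff.2 h).comp hδ
  have hmul : Tendsto (fun x : EuclideanSpace ℝ (Fin n) => c * ((volume (closedBall z (1 - ‖x‖))) / ν (closedBall z (1 - ‖x‖)))⁻¹)
      (nhdsWithin z (stolzSet n β z)) (nhds ⊤) := by
    have := ENNReal.Tendsto.const_mul (a := c) hinv (Or.inl (by simp))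
    simpa [ENNReal.mul_top hc0, Function.comp_def] using this
  refine tendsto_nhds_top_mono hmul ?_
  filter_upwards [self_mem_nhdsWithin] with x hx
  obtain ⟨hxB, -, hxz⟩ := hx
  rw [mem_ball_zero_iff] at hxB
  set δ := 1 - ‖x‖ with hδd
  have hδ : 0 < δ := by linarith
  have hdist : ∀ w ∈ sphere (0 : EuclideanSpace ℝ (Fin n)) 1, δ ≤ dist x w := by
    intro w hw
    rw [mem_sphere_zero_iff_norm] at hw
    have := norm_sub_norm_le w x
    rw [dist_comm, dist_eq_norm]; linarith
  have hlow : ENNReal.ofReal (((β + 1) * δ) ^ (-(n : ℝ))) * ν (closedBall z δ) ≤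
      ∫⁻ w, ENNReal.ofReal (dist x w ^ (-(n : ℝ))) ∂ν := by
    rw [← setLIntegral_const]
    refine le_trans (lintegral_mono_ae ?_) (setLIntegral_le_lintegral (closedBall z δ) _)
    filter_upwards [ae_restrict_of_ae (show ∀ᵐ w ∂ν, w ∈ sphere (0 : EuclideanSpace ℝ (Fin n)) 1 from hνS), ae_restrict_mem measurableSet_closedBall] with w hw hw2
    apply ENNReal.ofReal_le_ofReal
    have h1 := hdist w hw
    have h2 : dist x w ≤ dist x z + dist w z := by
      rw [dist_comm w z]; exact dist_triangle _ _ _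
    rw [mem_closedBall] at hw2
    exact Real.rpow_le_rpow_of_nonpos (by linarith) (by linarith) (by simp)
  refine le_trans ?_ hlow
  have hvol : volume (closedBall z δ) = ENNReal.ofReal (δ ^ n) * V := by
    rw [Measure.addHaar_closedBall _ _ hδ.le, finrank_euclideanSpace_fin]
  have hV1 : V ≠ ⊤ := measure_ball_lt_top.ne
  have hd0 : ENNReal.ofReal (δ ^ n) ≠ 0 := by simpa using pow_pos hδ n
  rw [ENNReal.inv_div (Or.inr (by rw [hvol]; exact ENNReal.mul_ne_top ENNReal.ofReal_ne_top hV1))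
    (Or.inr (by rw [hvol]; exact mul_ne_zero hd0 hV0)), hvol, hc,
    Real.mul_rpow (by linarith) hδ.le, ENNReal.ofReal_mul (by positivity), Real.rpow_neg hδ.le, Real.rpow_natCast, ENNReal.ofReal_inv_of_pos (by positivity),
    ENNReal.div_eq_inv_mul, ENNReal.mul_inv (Or.inl hd0) (Or.inl ENNReal.ofReal_ne_top)]
  apply le_of_eq
  rw [show ENNReal.ofReal ((β + 1) ^ (-(n : ℝ))) * V * ((ENNReal.ofReal (δ ^ n))⁻¹ * V⁻¹ * ν (closedBall z δ)) = (V * V⁻¹) * (ENNReal.ofReal ((β + 1) ^ (-(n : ℝ))) * (ENNReal.ofReal (δ ^ n))⁻¹ * ν (closedBall z δ)) by ring,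
    ENNReal.mul_inv_cancel hV0 hV1, one_mul]

lemma aux_finite {n : ℕ} (ν : Measure (EuclideanSpace ℝ (Fin n))) [IsFiniteMeasure ν]
    (hνS : ν (sphere (0 : EuclideanSpace ℝ (Fin n)) 1)ᶜ = 0)
    (x : EuclideanSpace ℝ (Fin n)) (hx : ‖x‖ < 1) :
    ∫⁻ w, ENNReal.ofReal (dist x w ^ (-(n : ℝ))) ∂ν ≠ ⊤ := by
  refine ne_top_of_le_ne_top (b := ∫⁻ w, ENNReal.ofReal ((1 - ‖x‖) ^ (-(n : ℝ))) ∂ν) ?_ ?_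
  · rw [lintegral_const]
    exact ENNReal.mul_ne_top ENNReal.ofReal_ne_top (measure_ne_top _ _)
  · refine lintegral_mono_ae ?_
    filter_upwards [(show ∀ᵐ w ∂ν, w ∈ sphere (0 : EuclideanSpace ℝ (Fin n)) 1 from hνS)] with w hw
    apply ENNReal.ofReal_le_ofReal
    rw [mem_sphere_zero_iff_norm] at hw
    have := norm_sub_norm_le w x
    refine Real.rpow_le_rpow_of_nonpos (by linarith) ?_ (by simp)
    rw [dist_comm, dist_eq_norm]; linarith

lemma aux_toReal {n : ℕ} (α : ℝ) (ν : Measure (EuclideanSpace ℝ (Fin n)))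
    (x : EuclideanSpace ℝ (Fin n)) :
    ∫ w, martinKernel n α x w ∂ν = (1 - ‖x‖ ^ 2) ^ (α / 2) *
      (∫⁻ w, ENNReal.ofReal (dist x w ^ (-(n : ℝ))) ∂ν).toReal := by
  unfold martinKernel
  rw [integral_const_mul, integral_eq_lintegral_of_nonneg_ae (ae_of_all _ fun w => by positivity)]
  exact (by fun_prop : Measurable fun w : EuclideanSpace ℝ (Fin n) =>
    dist x w ^ (-(n : ℝ))).aestronglyMeasurable

lemma aux_ratio {n : ℕ} (α : ℝ) (μ ν : Measure (EuclideanSpace ℝ (Fin n)))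
    (x : EuclideanSpace ℝ (Fin n)) (hx : ‖x‖ < 1) :
    (∫ w, martinKernel n α x w ∂μ) / (∫ w, martinKernel n α x w ∂ν) =
      (∫⁻ w, ENNReal.ofReal (dist x w ^ (-(n : ℝ))) ∂μ).toReal /
      (∫⁻ w, ENNReal.ofReal (dist x w ^ (-(n : ℝ))) ∂ν).toReal := by
  rw [aux_toReal, aux_toReal, mul_div_mul_left]
  have : 0 < 1 - ‖x‖ ^ 2 := by nlinarith [norm_nonneg x]
  positivity

lemma aux_limit {n : ℕ} (hn : 2 ≤ n) (α : ℝ) (μ ν η : Measure (EuclideanSpace ℝ (Fin n)))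
    [IsFiniteMeasure μ] [IsFiniteMeasure ν] [IsFiniteMeasure η]
    (hμS : μ (sphere (0 : EuclideanSpace ℝ (Fin n)) 1)ᶜ = 0)
    (hνS : ν (sphere (0 : EuclideanSpace ℝ (Fin n)) 1)ᶜ = 0)
    (hηS : η (sphere (0 : EuclideanSpace ℝ (Fin n)) 1)ᶜ = 0)
    (z : EuclideanSpace ℝ (Fin n)) (hz : ‖z‖ = 1) (c : NNReal)
    (h1 : μ ≤ (c : ENNReal) • ν + η) (h2 : (c : ENNReal) • ν ≤ μ + η)
    (h : Tendsto (fun r => (volume (closedBall z r)) / ν (closedBall z r)) (nhdsWithin 0 (Ioi 0))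
      (nhds 0))
    (hη : Tendsto (fun r => (η (closedBall z r)) / ν (closedBall z r)) (nhdsWithin 0 (Ioi 0))
      (nhds 0)) (β : ℝ) (hβ : 1 < β) :
    Tendsto (fun x => (∫ w, martinKernel n α x w ∂μ) / (∫ w, martinKernel n α x w ∂ν))
          (nhdsWithin z (stolzSet n β z)) (nhds (c : ℝ)) := by
  have hinf := aux_infinity hn ν hνS z hz h β hβ
  rw [Metric.tendsto_nhds]
  intro e he
  set A : ℝ := (2 + β) ^ (n : ℝ) with hA
  set B : ℝ := β ^ (n : ℝ) with hB
  have hA0 : 0 < A := by positivity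
  have hB0 : 0 < B := by positivity
  set ε : ℝ := e / (4 * A * B) with hε
  have hε0 : 0 < ε := by positivity
  have hev : ∀ᶠ r in nhdsWithin (0 : ℝ) (Ioi 0),
      η (closedBall z r) ≤ ENNReal.ofReal ε * ν (closedBall z r) := by
    filter_upwards [hη.eventually_lt_const (ENNReal.ofReal_pos.2 hε0)] with r hr
    rw [← ENNReal.div_le_iff_le_mul (Or.inr ENNReal.ofReal_ne_top)
      (Or.inr (ENNReal.ofReal_pos.2 hε0).ne')]
    exact hr.le
  obtain ⟨r₀, hr₀, hr⟩ := mem_nhdsGT_iff_exists_Ioo_subset.1 hev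
  have hr₀ : 0 < r₀ := hr₀
  set R : ℝ := r₀ ^ (-(n : ℝ)) with hR
  have hR0 : 0 < R := Real.rpow_pos_of_pos hr₀ _
  set m : ℝ := (η univ).toReal with hm
  have hm0 : 0 ≤ m := ENNReal.toReal_nonneg
  have hbig := hinf.eventually_const_lt (ENNReal.ofReal_lt_top (r := 4 * (A * (R * m)) / e))
  filter_upwards [hbig, self_mem_nhdsWithin] with x hxb hx
  have hxB : ‖x‖ < 1 := mem_ball_zero_iff.1 hx.1
  have hcmp := aux_compare hn η ν hηS z (ENNReal.ofReal ε) ENNReal.ofReal_ne_top r₀ hr₀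
    (fun r hr' => hr hr') β hβ x hx hνS
  rw [aux_ratio α μ ν x hxB]
  have fμ := aux_finite μ hμS x hxB
  have fν := aux_finite ν hνS x hxB
  have fη := aux_finite η hηS x hxB
  have g1 := lintegral_mono' h1 (le_refl fun w => ENNReal.ofReal (dist x w ^ (-(n : ℝ))))
  have g2 := lintegral_mono' h2 (le_refl fun w => ENNReal.ofReal (dist x w ^ (-(n : ℝ))))
  rw [lintegral_add_measure, lintegral_smul_measure] at g1 g2
  set U := ∫⁻ w, ENNReal.ofReal (dist x w ^ (-(n : ℝ))) ∂μ
  set H := ∫⁻ w, ENNReal.ofReal (dist x w ^ (-(n : ℝ))) ∂ν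
  set N := ∫⁻ w, ENNReal.ofReal (dist x w ^ (-(n : ℝ))) ∂η
  rw [← ENNReal.ofReal_toReal fμ, ← ENNReal.ofReal_toReal fν, ← ENNReal.ofReal_toReal fη] at g1 g2
  rw [← ENNReal.ofReal_toReal fν, ← ENNReal.ofReal_toReal fη, ← ENNReal.ofReal_toReal (measure_ne_top η univ)] at hcmp
  rw [← ENNReal.ofReal_toReal fν] at hxb
  have u0 : 0 ≤ U.toReal := ENNReal.toReal_nonneg
  have n0 : 0 ≤ N.toReal := ENNReal.toReal_nonneg
  have hh0 : 0 ≤ H.toReal := ENNReal.toReal_nonneg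
  rw [ENNReal.ofReal_lt_ofReal_iff_of_nonneg (by positivity)] at hxb
  have hH0 : 0 < H.toReal := lt_of_le_of_lt (by positivity) hxb
  generalize U.toReal = u at *
  generalize H.toReal = v at *
  generalize N.toReal = k at *
  rw [← ENNReal.ofReal_coe_nnreal (p := c), smul_eq_mul, ← ENNReal.ofReal_mul (by positivity),
    ← ENNReal.ofReal_add (by positivity) (by positivity),
    ENNReal.ofReal_le_ofReal_iff (by positivity)] at g1 g2
  rw [← hm, ← ENNReal.ofReal_mul (by positivity), ← ENNReal.ofReal_mul (by positivity),
    ← ENNReal.ofReal_mul (by positivity), ← ENNReal.ofReal_add (by positivity) (by positivity),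
    ← ENNReal.ofReal_mul (by positivity), ENNReal.ofReal_le_ofReal_iff (by positivity)] at hcmp
  have e1 : A * (ε * (B * v)) = e / 4 * v := by
    rw [hε]; field_simp
  have e2 : A * (R * m) < e / 4 * v := by
    rw [div_lt_iff₀ he] at hxb
    linarith
  have e3 : k < e * v := by
    have : 0 < e * v := by positivity
    nlinarith
  rw [Real.dist_eq, abs_lt]
  constructor
  · rw [lt_sub_iff_add_lt, lt_div_iff₀ hH0]; linarith
  · rw [sub_lt_iff_lt_add, div_lt_iff₀ hH0]; linarith


lemma aux_fatou {n : ℕ} (hn : 2 ≤ n) (α : ℝ) (μ ν : Measure (EuclideanSpace ℝ (Fin n)))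
    [IsFiniteMeasure μ] [IsFiniteMeasure ν]
    (hμS : μ (sphere (0 : EuclideanSpace ℝ (Fin n)) 1)ᶜ = 0)
    (hνS : ν (sphere (0 : EuclideanSpace ℝ (Fin n)) 1)ᶜ = 0) :
    ∀ᵐ z ∂ν, ∀ β : ℝ, 1 < β →
      Tendsto (fun x => (∫ w, martinKernel n α x w ∂μ) / (∫ w, martinKernel n α x w ∂ν))
          (nhdsWithin z (stolzSet n β z)) (nhds (μ.rnDeriv ν z).toReal) := by
  have : Nontrivial (EuclideanSpace ℝ (Fin n)) := by
    have : Nonempty (Fin n) := ⟨⟨0, by omega⟩⟩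
    infer_instance
  set f : EuclideanSpace ℝ (Fin n) → ℝ := fun w => (μ.rnDeriv ν w).toReal with hf
  have hfm : Measurable f := (Measure.measurable_rnDeriv μ ν).ennreal_toReal
  have hfi : Integrable f ν := Measure.integrable_toReal_rnDeriv
  have hvs : (volume : Measure (EuclideanSpace ℝ (Fin n))).MutuallySingular ν :=
    ⟨sphere 0 1, isClosed_sphere.measurableSet, Measure.addHaar_sphere _ _ _, hνS⟩
  have hv0 := hvs.rnDeriv_ae_eq_zero
  have hs0 := (Measure.mutuallySingular_singularPart μ ν).rnDeriv_ae_eq_zero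
  filter_upwards [Besicovitch.ae_tendsto_rnDeriv volume ν, hv0,
    Besicovitch.ae_tendsto_rnDeriv (μ.singularPart ν) ν, hs0,
    (Besicovitch.vitaliFamily ν).ae_tendsto_lintegral_enorm_sub_div hfi.locallyIntegrable,
    (show ∀ᵐ w ∂ν, w ∈ sphere (0 : EuclideanSpace ℝ (Fin n)) 1 from hνS)]
    with z h1 h1' h2 h2' h3 hz β hβ
  rw [h1'] at h1
  rw [h2'] at h2
  have h3 := h3.comp (Besicovitch.tendsto_filterAt ν z)
  set g : EuclideanSpace ℝ (Fin n) → ENNReal := fun w => ‖f w - f z‖ₑ with hg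
  have hgm : Measurable g := by fun_prop
  have hgi : ∫⁻ w, g w ∂ν ≠ ⊤ := (hfi.sub (integrable_const (f z))).2.ne
  have : IsFiniteMeasure (ν.withDensity g) := isFiniteMeasure_withDensity hgi
  have hf0 : 0 ≤ f z := ENNReal.toReal_nonneg
  have hfin : ∀ᵐ w ∂ν, μ.rnDeriv ν w = ENNReal.ofReal (f w) := by
    filter_upwards [Measure.rnDeriv_lt_top μ ν] with w hw
    rw [hf, ENNReal.ofReal_toReal hw.ne]
  have hLD : μ.HaveLebesgueDecomposition ν := Measure.haveLebesgueDecomposition_of_sigmaFinite μ ν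
  have hdec := Measure.haveLebesgueDecomposition_add μ ν
  have hc : ((f z).toNNReal : ENNReal) = ENNReal.ofReal (f z) := rfl
  have := aux_limit hn α μ ν (ν.withDensity g + μ.singularPart ν) hμS hνS ?_ z
    (mem_sphere_zero_iff_norm.1 hz) (f z).toNNReal ?_ ?_ h1 ?_ β hβ
  · rwa [Real.coe_toNNReal _ hf0] at this
  · rw [Measure.add_apply, withDensity_absolutelyContinuous ν g hνS, zero_add]
    exact le_antisymm ((Measure.singularPart_le μ ν _).trans hμS.le) zero_le
  · conv_lhs => rw [hdec]
    rw [← withDensity_const, ← add_assoc, ← withDensity_add_left measurable_const, add_comm]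
    refine add_le_add (withDensity_mono ?_) le_rfl
    filter_upwards [hfin] with w hw
    rw [hw, Pi.add_apply, hc, hg]
    simp only
    rw [Real.enorm_eq_ofReal_abs, ← ENNReal.ofReal_add hf0 (abs_nonneg _)]
    exact ENNReal.ofReal_le_ofReal (by linarith [le_abs_self (f w - f z)])
  · have : ((f z).toNNReal : ENNReal) • ν ≤ ν.withDensity (μ.rnDeriv ν) + ν.withDensity g := by
      rw [← withDensity_const, ← withDensity_add_right _ hgm]
      refine withDensity_mono ?_
      filter_upwards [hfin] with w hw
      rw [Pi.add_apply, hw, hc, hg]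
      simp only
      rw [Real.enorm_eq_ofReal_abs, ← ENNReal.ofReal_add ENNReal.toReal_nonneg (abs_nonneg _)]
      exact ENNReal.ofReal_le_ofReal (by linarith [neg_abs_le (f w - f z)])
    refine this.trans ?_
    refine add_le_add ?_ (Measure.le_add_right le_rfl)
    conv_rhs => rw [hdec]
    exact Measure.le_add_left le_rfl
  · have := h3.add h2
    simp only [Pi.zero_apply, add_zero] at this
    refine this.congr fun r => ?_
    rw [Measure.add_apply, withDensity_apply _ measurableSet_closedBall, ENNReal.add_div]
    rfl

lemma aux_pos {n : ℕ} (α : ℝ) (ν : Measure (EuclideanSpace ℝ (Fin n))) [IsFiniteMeasure ν]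
    (hν : ν ≠ 0)
    (hνS : ν (sphere (0 : EuclideanSpace ℝ (Fin n)) 1)ᶜ = 0)
    (x : EuclideanSpace ℝ (Fin n)) (hx : ‖x‖ < 1) :
    0 < ∫ w, martinKernel n α x w ∂ν := by
  rw [aux_toReal]
  have h1 : 0 < 1 - ‖x‖ ^ 2 := by nlinarith [norm_nonneg x]
  refine mul_pos (Real.rpow_pos_of_pos h1 _) (ENNReal.toReal_pos ?_ (aux_finite ν hνS x hx))
  intro h0
  rw [lintegral_eq_zero_iff (by fun_prop)] at h0
  apply hν
  rw [← ae_eq_bot, ← eventually_false_iff_eq_bot]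
  filter_upwards [h0, (show ∀ᵐ w ∂ν, w ∈ sphere (0 : EuclideanSpace ℝ (Fin n)) 1 from hνS)]
    with w h2 hw
  have hd : 0 < dist x w := by
    rw [dist_pos]
    rintro rfl
    rw [mem_sphere_zero_iff_norm] at hw
    linarith
  have := Real.rpow_pos_of_pos hd (-(n : ℝ))
  simp only [Pi.zero_apply, ENNReal.ofReal_eq_zero] at h2
  linarith

lemma aux_neBot {n : ℕ} (z : EuclideanSpace ℝ (Fin n)) (hz : ‖z‖ = 1) :
    (nhdsWithin z (stolzSet n 2 z)).NeBot := by
  have ht : Tendsto (fun t : ℝ => (1 - t) • z) (nhdsWithin 0 (Ioi 0))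
      (nhdsWithin z (stolzSet n 2 z)) := by
    rw [tendsto_nhdsWithin_iff]
    constructor
    · have : Continuous (fun t : ℝ => (1 - t) • z) := by fun_prop
      have h2 := this.tendsto 0
      simp only [sub_zero, one_smul] at h2
      exact h2.mono_left nhdsWithin_le_nhds
    · filter_upwards [Ioo_mem_nhdsGT (show (0 : ℝ) < 1 / 3 by norm_num)] with t ht
      have hnorm : ‖(1 - t) • z‖ = 1 - t := by
        rw [norm_smul, hz, mul_one, Real.norm_of_nonneg (by linarith [ht.2])]
      refine ⟨?_, ?_, ?_⟩
      · rw [mem_ball_zero_iff, hnorm]; linarith [ht.1]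
      · rw [hnorm]; linarith [ht.2]
      · have : (1 - t) • z - z = (-t) • z := by module
        rw [hnorm, dist_eq_norm, this, norm_smul, hz, norm_neg, Real.norm_of_nonneg ht.1.le]
        linarith [ht.1]
  exact ht.neBot

/-- Representation by nontangential boundary values in the unit ball:
with `u(x) = ∫_S M(x,w) μ(dw)`, `h(x) = ∫_S M(x,w) ν(dw)` for finite Borel measures
`μ, ν` on the sphere with `ν ≠ 0` and `sup_B u/h < ∞`, there is a Borel
`φ : S → [0,∞)` which is the nontangential limit of `u/h` ν-a.e., with
`u(x) = ∫_S M(x,w) φ(w) ν(dw)` on `B`; in particular `μ = φ ν`. -/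
theorem stmt15 (n : ℕ) (hn : 2 ≤ n) (α : ℝ) (hα : α ∈ Set.Ioo (0 : ℝ) 2)
    (μ ν : Measure (EuclideanSpace ℝ (Fin n)))
    [IsFiniteMeasure μ] [IsFiniteMeasure ν] (hν : ν ≠ 0)
    (hμS : μ (sphere (0 : EuclideanSpace ℝ (Fin n)) 1)ᶜ = 0)
    (hνS : ν (sphere (0 : EuclideanSpace ℝ (Fin n)) 1)ᶜ = 0)
    (hbdd : ∃ C : ℝ, ∀ x ∈ ball (0 : EuclideanSpace ℝ (Fin n)) 1,
      (∫ w, martinKernel n α x w ∂μ) / (∫ w, martinKernel n α x w ∂ν) ≤ C) :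
    ∃ φ : EuclideanSpace ℝ (Fin n) → ℝ, Measurable φ ∧ (∀ w, 0 ≤ φ w) ∧
      (∀ᵐ z ∂ν, ∀ β : ℝ, 1 < β →
        Tendsto (fun x =>
            (∫ w, martinKernel n α x w ∂μ) / (∫ w, martinKernel n α x w ∂ν))
          (nhdsWithin z (stolzSet n β z)) (nhds (φ z))) ∧
      (∀ x ∈ ball (0 : EuclideanSpace ℝ (Fin n)) 1,
        (∫ w, martinKernel n α x w ∂μ) = ∫ w, martinKernel n α x w * φ w ∂ν) ∧
      μ = ν.withDensity (fun w => ENNReal.ofReal (φ w)) := by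
  have hLD : μ.HaveLebesgueDecomposition ν := Measure.haveLebesgueDecomposition_of_sigmaFinite μ ν
  have hac : μ ≪ ν := by
    obtain ⟨C, hC⟩ := hbdd
    set D : ℝ := max C 1 with hD
    have hD0 : 0 < D := lt_of_lt_of_le one_pos (le_max_right _ _)
    have hlow : ∀ᵐ z ∂μ, ENNReal.ofReal D⁻¹ ≤ ν.rnDeriv μ z := by
      rcases eq_or_ne μ 0 with h0 | h0
      · rw [h0]; simp
      filter_upwards [aux_fatou hn α ν μ hνS hμS,
        (show ∀ᵐ w ∂μ, w ∈ sphere (0 : EuclideanSpace ℝ (Fin n)) 1 from hμS)] with z hz hzS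
      have := aux_neBot z (mem_sphere_zero_iff_norm.1 hzS)
      have hle : D⁻¹ ≤ (ν.rnDeriv μ z).toReal := by
        refine ge_of_tendsto (hz 2 one_lt_two) ?_
        filter_upwards [self_mem_nhdsWithin] with x hx
        have hxB : ‖x‖ < 1 := mem_ball_zero_iff.1 hx.1
        have hu := aux_pos α μ h0 hμS x hxB
        have hh := aux_pos α ν hν hνS x hxB
        rw [← inv_div]
        exact inv_anti₀ (by positivity) ((hC x hx.1).trans (le_max_left _ _))
      exact ENNReal.ofReal_le_of_le_toReal hle
    refine Measure.AbsolutelyContinuous.mk fun s hs hs0 => ?_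
    have h1 : ∫⁻ w in s, ν.rnDeriv μ w ∂μ ≤ 0 := by
      rw [← hs0]; exact Measure.setLIntegral_rnDeriv_le s
    have h2 : ENNReal.ofReal D⁻¹ * μ s ≤ 0 := by
      rw [← setLIntegral_const]
      exact (lintegral_mono_ae (ae_restrict_of_ae hlow)).trans h1
    have h3 := le_antisymm h2 zero_le
    rcases mul_eq_zero.1 h3 with h | h
    · have : 0 < D⁻¹ := by positivity
      exact absurd h (ENNReal.ofReal_pos.2 this).ne'
    · exact h
  have hφ : μ = ν.withDensity (fun w => ENNReal.ofReal (μ.rnDeriv ν w).toReal) := by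
    conv_lhs => rw [← Measure.withDensity_rnDeriv_eq μ ν hac]
    refine withDensity_congr_ae ?_
    filter_upwards [Measure.rnDeriv_lt_top μ ν] with w hw
    rw [ENNReal.ofReal_toReal hw.ne]
  refine ⟨fun w => (μ.rnDeriv ν w).toReal, (Measure.measurable_rnDeriv μ ν).ennreal_toReal,
    fun w => ENNReal.toReal_nonneg, aux_fatou hn α μ ν hμS hνS, fun x hx => ?_, hφ⟩
  rw [← integral_rnDeriv_smul hac]
  simp only [smul_eq_mul, mul_comm]
end
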